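/- arXiv:1510.06181 — 6 statements merged into one kernel-verified Lean document; each statement's English description precedes it below -/
import Mathlib

section
/- Let R be an integral domain with fraction field K, let A be a finite flat R-algebra, and let F be a finite subset of A^K = K ⊗_R A. Then Gen_A(F) := {p ∈ Spec(R) : F ⊆ A_p}, where A_p denotes the image of the localization A_p in A^K, is a neighborhood of the generic point of Spec(R). If A is finitely presented as an R-module, then Gen_A(F) is an open subset of Spec(R). If moreover R is a Krull domain, then the complement Ex_A(F) := Spec(R) \ Gen_A(F) is either empty or pure of codimension one in Spec(R) with finitely many irreducible components. -/
open TensorProduct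

/-- An irreducible component of `s`: a maximal irreducible subset of `s`. -/
def IsIrredCompOf {X : Type*} [TopologicalSpace X] (C s : Set X) : Prop :=
  IsIrreducible C ∧ C ⊆ s ∧ ∀ C' : Set X, IsIrreducible C' → C' ⊆ s → C ⊆ C' → C' = C

/-- A closed subset of `Spec R` is pure of codimension one with finitely many irreducible
components. -/
def IsReducedWeilDivisor {R : Type*} [CommRing R] (s : Set (PrimeSpectrum R)) : Prop :=
  {C | IsIrredCompOf C s}.Finite ∧
    ∀ C, IsIrredCompOf C s → ∃ q : PrimeSpectrum R, closure C = closure {q} ∧ Order.height q = 1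

/-- A Krull domain: localizations at height-one primes are discrete valuation rings, `R` is the
intersection of these localizations inside its fraction field, and every nonzero element lies in
only finitely many height-one primes. -/
def IsKrullDomain (R : Type*) [CommRing R] [IsDomain R] : Prop :=
  (∀ p : PrimeSpectrum R, Order.height p = 1 →
    letI : IsDomain (Localization.AtPrime p.asIdeal) :=
      IsLocalization.isDomain_of_local_atPrime p.2
    IsDiscreteValuationRing (Localization.AtPrime p.asIdeal)) ∧
  (∀ x : FractionRing R,
    (∀ p : PrimeSpectrum R, Order.height p = 1 →
      ∃ (a : R) (s : R), s ∉ p.asIdeal ∧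
        algebraMap R (FractionRing R) s * x = algebraMap R (FractionRing R) a) →
    ∃ r : R, algebraMap R (FractionRing R) r = x) ∧
  (∀ r : R, r ≠ 0 → {p : PrimeSpectrum R | Order.height p = 1 ∧ r ∈ p.asIdeal}.Finite)

section BlockDefs
variable {B : Type*} [Ring B]
def IsBlockIdemOn (S : Set B) (e : B) : Prop :=
  e ∈ S ∧ IsIdempotentElem e ∧ e ≠ 0 ∧ (∀ x ∈ S, e * x = x * e) ∧
    ∀ f g : B, f ∈ S → g ∈ S → (∀ x ∈ S, f * x = x * f) → (∀ x ∈ S, g * x = x * g) →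
      IsIdempotentElem f → IsIdempotentElem g → f * g = 0 → f + g = e → f = 0 ∨ g = 0
def IsBlockIdem (e : B) : Prop := IsBlockIdemOn Set.univ e
end BlockDefs

/-- The subring `A_p ⊆ A^K`. -/
def localizedAt (R : Type*) [CommRing R] [IsDomain R] (A : Type*) [Ring A] [Algebra R A]
    (p : PrimeSpectrum R) : Set (FractionRing R ⊗[R] A) :=
  {x | ∃ (a : A) (s : R), s ∉ p.asIdeal ∧ s • x = Algebra.TensorProduct.includeRight a}

variable (R : Type*) [CommRing R] [IsDomain R] (A : Type*) [Ring A] [Algebra R A]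

/-!
The primes at which `x ∈ A^K` fails to lie in `A_p` are those containing the ideal of denominators
`I = {r | r • x ∈ A}`, so the exceptional locus of `F` is a finite union of closed sets `V(I)`, and
`I ≠ 0` because `A^K` is a localization of `A`.

If `R` is the intersection of its localizations at height-one primes, then a projective `A` is the
intersection of its localizations `A_q` with `q` of height one, because membership in `A` can be
tested on linear forms; hence `I = ⋂ I_q` as well. Only finitely many height-one primes contain
`I`, and an element `s` of all of them satisfies `s ^ n ∈ I_q` for one `n` and every height-one `q`.
So the radical of `I` is the intersection of these primes, and they are the generic points of
`V(I)`.
-/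

section IrreducibleComponents

variable {X : Type*} [TopologicalSpace X]

theorem IsIrredCompOf.exists_eq_closure_singleton {C T : Set X} (hT : T.Finite)
    (hC : IsIrredCompOf C (⋃ q ∈ T, closure {q})) : ∃ q ∈ T, C = closure {q} := by
  classical
  obtain ⟨hirr, hsub, hmax⟩ := hC
  obtain ⟨Z, hZ, hCZ⟩ := isIrreducible_iff_sUnion_isClosed.1 hirr
    (hT.toFinset.image fun q ↦ closure {q}) (by simp) (by simpa using hsub)
  obtain ⟨q, hq, rfl⟩ := Finset.mem_image.1 hZ
  rw [Set.Finite.mem_toFinset] at hq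
  have closure_subset : closure {q} ⊆ ⋃ q ∈ T, closure {q} :=
    Set.subset_biUnion_of_mem (u := fun q ↦ closure {q}) hq
  exact ⟨q, hq, (hmax _ isIrreducible_singleton.closure closure_subset hCZ).symm⟩

end IrreducibleComponents

theorem isReducedWeilDivisor_biUnion_closure {R : Type*} [CommRing R]
    {T : Set (PrimeSpectrum R)} (hT : T.Finite) (hheight : ∀ q ∈ T, Order.height q = 1) :
    IsReducedWeilDivisor (⋃ q ∈ T, closure {q}) := by
  refine ⟨(hT.image fun q ↦ closure {q}).subset fun C hC ↦ ?_, fun C hC ↦ ?_⟩ <;>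
    obtain ⟨q, hq, rfl⟩ := hC.exists_eq_closure_singleton hT
  · exact ⟨q, hq, rfl⟩
  · exact ⟨q, closure_closure, hheight q hq⟩

section HeightOneSaturated

variable {R : Type*} [CommRing R] {V W : Type*} [AddCommGroup V] [Module R V]
  [AddCommGroup W] [Module R W]

/-- The submodule `L` of `V` is the intersection of the preimages in `V` of its localizations
`L_q ⊆ V_q` at the height-one primes `q`. The condition `x ∈ L_q` is spelled out as: some
`t ∉ q` satisfies `t • x ∈ L`. -/
def IsHeightOneSaturated (L : Submodule R V) : Prop :=
  ∀ x : V, (∀ q : PrimeSpectrum R, Order.height q = 1 → ∃ t ∉ q.asIdeal, t • x ∈ L) → x ∈ L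

namespace IsHeightOneSaturated

theorem comap {L : Submodule R V} (hL : IsHeightOneSaturated L) (f : W →ₗ[R] V) :
    IsHeightOneSaturated (L.comap f) := by
  intro x hx
  refine hL (f x) fun q hq ↦ ?_
  obtain ⟨t, htq, ht⟩ := hx q hq
  exact ⟨t, htq, by simpa using ht⟩

theorem iInf {ι : Sort*} {L : ι → Submodule R V} (hL : ∀ i, IsHeightOneSaturated (L i)) :
    IsHeightOneSaturated (⨅ i, L i) := by
  intro x hx
  refine (Submodule.mem_iInf L).2 fun i ↦ hL i x fun q hq ↦ ?_
  obtain ⟨t, htq, ht⟩ := hx q hq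
  exact ⟨t, htq, (Submodule.mem_iInf L).1 ht i⟩

theorem colon_singleton {L : Submodule R V} (hL : IsHeightOneSaturated L) (x : V) :
    IsHeightOneSaturated (L.colon {x}) := by
  have colon_eq_comap : L.colon {x} = L.comap (LinearMap.toSpanSingleton R V x) := by
    ext r
    simp
  exact colon_eq_comap ▸ hL.comap _

end IsHeightOneSaturated

end HeightOneSaturated

section ProjectiveModule

variable {R : Type*} [CommRing R] {K : Type*} [CommRing K] [Algebra R K]

theorem mem_range_mk_one_of_forall_finsuppScalarRight_mem_one {ι : Type*} [DecidableEq ι]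
    {z : K ⊗[R] (ι →₀ R)}
    (hz : ∀ i, finsuppScalarRight R R K ι z i ∈ (1 : Submodule R K)) :
    z ∈ LinearMap.range (TensorProduct.mk R K (ι →₀ R) 1) := by
  rw [← (finsuppScalarRight R R K ι).symm_apply_apply z,
    ← (finsuppScalarRight R R K ι z).sum_single, Finsupp.sum, map_sum]
  refine Submodule.sum_mem _ fun i _ ↦ ?_
  obtain ⟨r, hr⟩ := Submodule.mem_one.1 (hz i)
  refine ⟨r • Finsupp.single i 1, ?_⟩
  rw [finsuppScalarRight_symm_apply_single, ← hr, Algebra.algebraMap_eq_smul_one,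
    map_smul, TensorProduct.mk_apply, TensorProduct.smul_tmul']

variable {M : Type*} [AddCommGroup M] [Module R M]

theorem range_mk_one_eq_iInf_comap_dual [Module.Projective R M] :
    LinearMap.range (TensorProduct.mk R K M 1) = ⨅ φ : Module.Dual R M,
      (1 : Submodule R K).comap ((TensorProduct.rid R K).toLinearMap ∘ₗ φ.lTensor K) := by
  classical
  refine le_antisymm (le_iInf fun φ ↦ ?_) fun y hy ↦ ?_
  · rintro _ ⟨m, rfl⟩
    exact Submodule.mem_one.2 ⟨φ m, by simp [Algebra.algebraMap_eq_smul_one]⟩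
  · obtain ⟨σ, hσ⟩ := Module.projective_def'.1 ‹Module.Projective R M›
    have coordinates_mem : ∀ m, finsuppScalarRight R R K M (σ.lTensor K y) m ∈
        (1 : Submodule R K) := fun m ↦ by
      rw [finsuppScalarRight_apply, ← LinearMap.lTensor_comp_apply]
      exact (Submodule.mem_iInf _).1 hy (Finsupp.lapply m ∘ₗ σ)
    obtain ⟨z, hz⟩ := mem_range_mk_one_of_forall_finsuppScalarRight_mem_one coordinates_mem
    refine ⟨Finsupp.linearCombination R id z, ?_⟩
    calc TensorProduct.mk R K M 1 (Finsupp.linearCombination R id z)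
        = (Finsupp.linearCombination R id).lTensor K (σ.lTensor K y) := by simp [← hz]
      _ = y := by rw [← LinearMap.lTensor_comp_apply, hσ, LinearMap.lTensor_id_apply]

theorem IsHeightOneSaturated.range_mk_one [Module.Projective R M]
    (hR : IsHeightOneSaturated (1 : Submodule R K)) :
    IsHeightOneSaturated (LinearMap.range (TensorProduct.mk R K M 1)) :=
  range_mk_one_eq_iInf_comap_dual (R := R) (K := K) (M := M) ▸ .iInf fun _ ↦ hR.comap _

end ProjectiveModule

section WeaklyKrull

/-- For a domain `R`: `R` is a weakly Krull domain, that is, the intersection inside its fraction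
field of its localizations at height-one primes, each nonzero element of `R` lying in only finitely
many of these primes. The localizations need not be discrete valuation rings. -/
def IsWeaklyKrull (R : Type*) [CommRing R] : Prop :=
  IsHeightOneSaturated (1 : Submodule R (FractionRing R)) ∧
    ∀ r : R, r ≠ 0 → {q : PrimeSpectrum R | Order.height q = 1 ∧ r ∈ q.asIdeal}.Finite

/-- The height-one primes of `R` containing the ideal `I`. -/
def heightOnePrimesOver {R : Type*} [CommRing R] (I : Ideal R) : Set (PrimeSpectrum R) :=
  {q | Order.height q = 1 ∧ I ≤ q.asIdeal}

variable {R}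

theorem IsKrullDomain.isWeaklyKrull (hR : IsKrullDomain R) : IsWeaklyKrull R := by
  refine ⟨fun x hx ↦ Submodule.mem_one.2 <| hR.2.1 x fun q hq ↦ ?_, hR.2.2⟩
  obtain ⟨t, htq, ht⟩ := hx q hq
  obtain ⟨a, ha⟩ := Submodule.mem_one.1 ht
  exact ⟨a, t, htq, by rw [ha, Algebra.smul_def]⟩

theorem IsWeaklyKrull.finite_heightOnePrimesOver {R : Type*} [CommRing R] (hR : IsWeaklyKrull R)
    {I : Ideal R} (hI : I ≠ ⊥) : (heightOnePrimesOver I).Finite := by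
  obtain ⟨r, hrI, hr⟩ := Submodule.exists_mem_ne_zero_of_ne_bot hI
  exact (hR.2 r hr).subset fun q hq ↦ ⟨hq.1, hq.2 hrI⟩

theorem eq_bot_of_lt_of_height_eq_one {p q : PrimeSpectrum R} (hq : Order.height q = 1)
    (hpq : p < q) : p = ⊥ := by
  have height_lt : Order.height p < 1 :=
    hq ▸ Order.height_strictMono hpq ((Order.height_mono hpq.le).trans_lt (by simp [hq]))
  exact (Order.height_eq_zero.1 (Order.lt_one_iff.1 height_lt)).eq_bot

theorem exists_notMem_mul_pow_mem_of_height_eq_one {I : Ideal R} (hI : I ≠ ⊥)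
    {q : PrimeSpectrum R} (hq : Order.height q = 1) {s : R} (hs : s ∈ q.asIdeal) :
    ∃ n : ℕ, ∃ t ∉ q.asIdeal, t * s ^ n ∈ I := by
  by_contra! hnot
  have disjoint_I :
      Disjoint (I : Set R) (q.asIdeal.primeCompl ⊔ Submonoid.powers s : Submonoid R) := by
    refine Set.disjoint_left.2 fun r hrI hr ↦ ?_
    obtain ⟨t, ht, _, ⟨n, rfl⟩, rfl⟩ := Submonoid.mem_sup.1 hr
    exact hnot n t ht hrI
  obtain ⟨P, hP, hIP, disjoint_P⟩ := Ideal.exists_le_prime_disjoint I _ disjoint_I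
  have P_le_q : P ≤ q.asIdeal := fun r hrP ↦ by_contra fun hrq ↦
    Set.disjoint_left.1 disjoint_P hrP (Submonoid.mem_sup_left hrq)
  have s_notMem_P : s ∉ P := fun hsP ↦
    Set.disjoint_left.1 disjoint_P hsP (Submonoid.mem_sup_right (Submonoid.mem_powers s))
  have P_lt_q : (⟨P, hP⟩ : PrimeSpectrum R) < q :=
    lt_of_le_not_ge P_le_q fun hqP ↦ s_notMem_P (hqP hs)
  have P_eq_bot : P = ⊥ :=
    congrArg PrimeSpectrum.asIdeal (eq_bot_of_lt_of_height_eq_one hq P_lt_q)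
  exact hI (le_bot_iff.1 (P_eq_bot ▸ hIP))

theorem IsHeightOneSaturated.radical_eq_inf_heightOnePrimesOver {I : Ideal R}
    (hI : IsHeightOneSaturated I) (hne : I ≠ ⊥) (hfin : (heightOnePrimesOver I).Finite) :
    I.radical = hfin.toFinset.inf PrimeSpectrum.asIdeal := by
  refine le_antisymm (Finset.le_inf fun q hq ↦ ?_) fun s hs ↦ ?_
  · exact q.isPrime.radical_le_iff.2 (hfin.mem_toFinset.1 hq).2
  · have hs_mem : ∀ q ∈ heightOnePrimesOver I, s ∈ q.asIdeal := by
      simpa [Submodule.mem_finsetInf] using hs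
    have eventually_mem : ∀ᶠ n : ℕ in Filter.atTop, ∀ q ∈ heightOnePrimesOver I,
        ∃ t ∉ q.asIdeal, t * s ^ n ∈ I := by
      refine (Filter.eventually_all_finite hfin).2 fun q hq ↦ ?_
      obtain ⟨n, t, htq, ht⟩ := exists_notMem_mul_pow_mem_of_height_eq_one hne hq.1 (hs_mem q hq)
      filter_upwards [Filter.eventually_ge_atTop n] with k hnk
      exact ⟨t, htq, I.mem_of_dvd (mul_dvd_mul_left t (pow_dvd_pow s hnk)) ht⟩
    obtain ⟨n, hn⟩ := eventually_mem.exists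
    refine ⟨n, hI _ fun q hq ↦ ?_⟩
    by_cases hIq : I ≤ q.asIdeal
    · exact hn q ⟨hq, hIq⟩
    · obtain ⟨t, htI, htq⟩ := SetLike.not_le_iff_exists.1 hIq
      exact ⟨t, htq, I.mul_mem_right _ htI⟩

theorem IsHeightOneSaturated.zeroLocus_eq_biUnion_closure {I : Ideal R}
    (hI : IsHeightOneSaturated I) (hne : I ≠ ⊥) (hfin : (heightOnePrimesOver I).Finite) :
    PrimeSpectrum.zeroLocus (I : Set R) = ⋃ q ∈ heightOnePrimesOver I, closure {q} := by
  ext p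
  simp only [PrimeSpectrum.closure_singleton, Set.mem_iUnion, PrimeSpectrum.mem_zeroLocus,
    SetLike.coe_subset_coe, exists_prop]
  rw [← p.isPrime.radical_le_iff, hI.radical_eq_inf_heightOnePrimesOver hne hfin,
    p.isPrime.inf_le']
  simp only [Set.Finite.mem_toFinset]

end WeaklyKrull

section DenominatorIdeal

/-- The ideal of those `r : R` for which `r • x` comes from `M`, for `x` in the generic fibre
`K ⊗ M` of `M`. -/
def denominatorIdeal {R M : Type*} [CommRing R] [AddCommGroup M] [Module R M]
    (x : FractionRing R ⊗[R] M) : Ideal R :=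
  (LinearMap.range (TensorProduct.mk R (FractionRing R) M 1)).colon {x}

theorem denominatorIdeal_ne_bot {R M : Type*} [CommRing R] [Nontrivial R] [AddCommGroup M]
    [Module R M] (x : FractionRing R ⊗[R] M) : denominatorIdeal x ≠ ⊥ := by
  obtain ⟨⟨m, s⟩, hs⟩ :=
    IsLocalizedModule.surj (nonZeroDivisors R) (TensorProduct.mk R (FractionRing R) M 1) x
  have s_mem : (s : R) ∈ denominatorIdeal x := Submodule.mem_colon_singleton.2 ⟨m, hs.symm⟩
  exact Submodule.ne_bot_iff _ |>.2 ⟨s, s_mem, nonZeroDivisors.coe_ne_zero s⟩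

variable {R A}

theorem IsWeaklyKrull.zeroLocus_denominatorIdeal (hR : IsWeaklyKrull R) {M : Type*}
    [AddCommGroup M] [Module R M] [Module.Projective R M] (x : FractionRing R ⊗[R] M) :
    PrimeSpectrum.zeroLocus (denominatorIdeal x : Set R) =
      ⋃ q ∈ heightOnePrimesOver (denominatorIdeal x), closure {q} :=
  (hR.1.range_mk_one.colon_singleton x).zeroLocus_eq_biUnion_closure
    (denominatorIdeal_ne_bot x) (hR.finite_heightOnePrimesOver (denominatorIdeal_ne_bot x))

theorem mem_localizedAt_iff_not_denominatorIdeal_le {x : FractionRing R ⊗[R] A}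
    {p : PrimeSpectrum R} : x ∈ localizedAt R A p ↔ ¬ denominatorIdeal x ≤ p.asIdeal := by
  simp only [localizedAt, denominatorIdeal, SetLike.not_le_iff_exists,
    Submodule.mem_colon_singleton, LinearMap.mem_range, Set.mem_ofPred_eq]
  constructor
  · rintro ⟨a, s, hs, ha⟩
    exact ⟨s, ⟨a, ha.symm⟩, hs⟩
  · rintro ⟨s, ⟨a, ha⟩, hs⟩
    exact ⟨a, s, hs, ha.symm⟩

theorem compl_setOf_subset_localizedAt (F : Set (FractionRing R ⊗[R] A)) :
    {p : PrimeSpectrum R | F ⊆ localizedAt R A p}ᶜ =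
      ⋃ x ∈ F, PrimeSpectrum.zeroLocus (denominatorIdeal x : Set R) := by
  ext p
  simp [Set.not_subset, mem_localizedAt_iff_not_denominatorIdeal_le, PrimeSpectrum.mem_zeroLocus]

theorem isOpen_setOf_subset_localizedAt {F : Set (FractionRing R ⊗[R] A)} (hF : F.Finite) :
    IsOpen {p : PrimeSpectrum R | F ⊆ localizedAt R A p} := by
  rw [← isClosed_compl_iff, compl_setOf_subset_localizedAt]
  exact hF.isClosed_biUnion fun _ _ ↦ PrimeSpectrum.isClosed_zeroLocus _

theorem subset_localizedAt_bot (F : Set (FractionRing R ⊗[R] A)) :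
    F ⊆ localizedAt R A ⊥ := fun x _ ↦
  mem_localizedAt_iff_not_denominatorIdeal_le.2 fun hle ↦
    denominatorIdeal_ne_bot x (le_bot_iff.1 hle)

theorem IsWeaklyKrull.isReducedWeilDivisor_compl_setOf_subset_localizedAt (hR : IsWeaklyKrull R)
    [Module.Projective R A] {F : Set (FractionRing R ⊗[R] A)} (hF : F.Finite) :
    IsReducedWeilDivisor {p : PrimeSpectrum R | F ⊆ localizedAt R A p}ᶜ := by
  have compl_eq : {p : PrimeSpectrum R | F ⊆ localizedAt R A p}ᶜ =
      ⋃ q ∈ ⋃ x ∈ F, heightOnePrimesOver (denominatorIdeal x), closure {q} := by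
    simp only [compl_setOf_subset_localizedAt, hR.zeroLocus_denominatorIdeal, Set.biUnion_iUnion]
  rw [compl_eq]
  refine isReducedWeilDivisor_biUnion_closure
    (hF.biUnion fun x _ ↦ hR.finite_heightOnePrimesOver (denominatorIdeal_ne_bot x)) fun q hq ↦ ?_
  obtain ⟨x, _, hqx⟩ := Set.mem_iUnion₂.1 hq
  exact hqx.1

end DenominatorIdeal

theorem stmt0_general (F : Set (FractionRing R ⊗[R] A)) (hF : F.Finite) :
    {p : PrimeSpectrum R | F ⊆ localizedAt R A p} ∈ nhds ⊥ ∧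
    IsOpen {p : PrimeSpectrum R | F ⊆ localizedAt R A p} ∧
    (Module.Projective R A → IsWeaklyKrull R →
      IsReducedWeilDivisor {p : PrimeSpectrum R | F ⊆ localizedAt R A p}ᶜ) :=
  have isOpen_gen := isOpen_setOf_subset_localizedAt hF
  ⟨isOpen_gen.mem_nhds (subset_localizedAt_bot F), isOpen_gen,
    fun _ hR ↦ hR.isReducedWeilDivisor_compl_setOf_subset_localizedAt hF⟩

theorem stmt0 [Module.Finite R A] [Module.Flat R A]
    (F : Set (FractionRing R ⊗[R] A)) (hF : F.Finite) :
    {p : PrimeSpectrum R | F ⊆ localizedAt R A p} ∈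
      nhds (⟨⊥, Ideal.bot_prime⟩ : PrimeSpectrum R) ∧
    (Module.FinitePresentation R A →
      IsOpen {p : PrimeSpectrum R | F ⊆ localizedAt R A p}) ∧
    (Module.FinitePresentation R A → IsKrullDomain R →
      {p : PrimeSpectrum R | F ⊆ localizedAt R A p}ᶜ = ∅ ∨
        IsReducedWeilDivisor {p : PrimeSpectrum R | F ⊆ localizedAt R A p}ᶜ) := by
  obtain ⟨mem_nhds, isOpen_gen, isReducedWeilDivisor_ex⟩ := stmt0_general R A F hF
  exact ⟨mem_nhds, fun _ ↦ isOpen_gen, fun _ hR ↦ .inr <| isReducedWeilDivisor_ex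
    Module.Flat.projective_of_finitePresentation hR.isWeaklyKrull⟩
end

section
/- Let R be an integral domain with fraction field K and let A be a finite flat R-algebra that is finitely presented as an R-module. Then the map γ_A : Spec(R) → Part(Bl(A^K)) is lower semicontinuous: for every partition P in the image Γ_A of γ_A, the skeleton Γ_A^≤(P) := ⋃_{P' ≤ P} γ_A^{-1}(P') is closed in Spec(R); consequently each stratum Γ_A(P) := γ_A^{-1}(P) is open in Γ_A^≤(P), hence locally closed in Spec(R). -/
open TensorProduct

/-- Two elements of `A^K` (typically block idempotents of `A^K`) lie in the same block of the
localization `A_p`, i.e. there is a block idempotent of `A_p` acting as the identity on both. -/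
def inSameBlockAt (R : Type*) [CommRing R] [IsDomain R] (A : Type*) [Ring A] [Algebra R A]
    (p : PrimeSpectrum R) (c d : FractionRing R ⊗[R] A) : Prop :=
  ∃ e, IsBlockIdemOn (localizedAt R A p) e ∧ e * c = c ∧ e * d = d

variable (R : Type*) [CommRing R] [IsDomain R] (A : Type*) [Ring A] [Algebra R A]

/-!
Since `A^K` is finite-dimensional, it has only finitely many central idempotents, and those lying in
`A_q` are exactly the central idempotents of `A_q`. Hence a block `c` of `A^K` lies under a unique
block of `A_q`, the product of all central idempotents of `A_q` fixing `c`, and `c`, `d` lie in the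
same block of `A_q` iff every central idempotent `f ∈ A_q` with `f * c = c` also satisfies
`f * d = d`. For fixed `f` the condition `f ∈ A_q` is open in `q`, because it says that some
denominator of `f` is not in `q`. So "`c` and `d` lie in the same block of `A_q`" is a closed
condition on `q`; the skeleton is an intersection of such closed sets, and the stratum is cut out of
it by finitely many complements.
-/

section CentralIdempotents

variable {B : Type*} [Ring B]

/-- `f` is a central idempotent of the subring of `B` with carrier `S`. As in `IsBlockIdemOn`, `f`
is an element of `B` and centrality is only tested against `S`. -/
structure IsCentralIdemOn (S : Set B) (f : B) : Prop where
  mem : f ∈ S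
  isIdempotentElem : IsIdempotentElem f
  comm : ∀ x ∈ S, f * x = x * f

namespace IsCentralIdemOn

variable {S : Subring B} {e f : B}

lemma one : IsCentralIdemOn (S : Set B) 1 :=
  ⟨S.one_mem, .one, fun x _ ↦ by rw [one_mul, mul_one]⟩

lemma one_sub (hf : IsCentralIdemOn (S : Set B) f) : IsCentralIdemOn (S : Set B) (1 - f) :=
  ⟨S.sub_mem S.one_mem hf.mem, hf.isIdempotentElem.one_sub, fun x hx ↦ by
    rw [sub_mul, mul_sub, hf.comm x hx, one_mul, mul_one]⟩

lemma mul (he : IsCentralIdemOn (S : Set B) e) (hf : IsCentralIdemOn (S : Set B) f) :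
    IsCentralIdemOn (S : Set B) (e * f) :=
  ⟨S.mul_mem he.mem hf.mem,
    he.isIdempotentElem.mul_of_commute (he.comm f hf.mem) hf.isIdempotentElem,
    fun x hx ↦ Commute.mul_left (he.comm x hx) (hf.comm x hx)⟩

end IsCentralIdemOn

lemma isCentralIdemOn_iff_of_centralizer_subset_center {S : Set B}
    (hS : S.centralizer ⊆ Set.center B) {f : B} :
    IsCentralIdemOn S f ↔ f ∈ S ∧ IsCentralIdemOn Set.univ f := by
  refine ⟨fun hf ↦ ⟨hf.mem, trivial, hf.isIdempotentElem, fun x _ ↦ ?_⟩,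
    fun ⟨hmem, hf⟩ ↦ ⟨hmem, hf.isIdempotentElem, fun x _ ↦ hf.comm x trivial⟩⟩
  have hcenter : f ∈ Set.center B := hS fun y hy ↦ (hf.comm y hy).symm
  exact (Semigroup.mem_center_iff.mp hcenter x).symm

lemma finite_setOf_isIdempotentElem (Z : Type*) [CommRing Z] [Finite (PrimeSpectrum Z)] :
    {e : Z | IsIdempotentElem e}.Finite :=
  have : Finite (TopologicalSpace.Clopens (PrimeSpectrum Z)) :=
    .of_injective (SetLike.coe : _ → Set (PrimeSpectrum Z)) SetLike.coe_injective
  Finite.of_equiv _ (PrimeSpectrum.isIdempotentElemEquivClopens (R := Z)).symm.toEquiv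

lemma finite_setOf_isCentralIdemOn_univ (K : Type*) [Field K] [Algebra K B] [Module.Finite K B] :
    {f : B | IsCentralIdemOn Set.univ f}.Finite := by
  let Z := Subalgebra.center K B
  have : Module.Finite K Z := inferInstanceAs (Module.Finite K Z.toSubmodule)
  have : IsArtinianRing Z := .of_finite K Z
  refine ((finite_setOf_isIdempotentElem Z).image Subtype.val).subset fun f hf ↦ ?_
  have hcenter : f ∈ Z := Subalgebra.mem_center_iff.mpr fun x ↦ (hf.comm x trivial).symm
  exact ⟨⟨f, hcenter⟩, Subtype.ext hf.isIdempotentElem, rfl⟩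

end CentralIdempotents

section Blocks

variable {B : Type*} [Ring B] {S : Subring B} {c d e f : B}

lemma IsBlockIdemOn.isCentralIdemOn {S : Set B} (he : IsBlockIdemOn S e) : IsCentralIdemOn S e :=
  ⟨he.1, he.2.1, he.2.2.2.1⟩

lemma IsBlockIdemOn.ne_zero {S : Set B} (he : IsBlockIdemOn S e) : e ≠ 0 := he.2.2.1

lemma IsBlockIdemOn.mul_eq_zero_or_mul_eq_self (he : IsBlockIdemOn (S : Set B) e)
    (hf : IsCentralIdemOn (S : Set B) f) : f * e = 0 ∨ f * e = e := by
  have hfe := hf.mul he.isCentralIdemOn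
  have hfe' := hf.one_sub.mul he.isCentralIdemOn
  have horth : f * e * ((1 - f) * e) = 0 := by
    have hcomm : Commute e (1 - f) := he.isCentralIdemOn.comm _ hf.one_sub.mem
    rw [hcomm.mul_mul_mul_comm, hf.isIdempotentElem.mul_one_sub_self, zero_mul]
  have hsum : f * e + (1 - f) * e = e := by rw [← add_mul, add_sub_cancel, one_mul]
  obtain ⟨-, -, -, -, hprim⟩ := he
  refine (hprim _ _ hfe.mem hfe'.mem hfe.comm hfe'.comm hfe.isIdempotentElem
    hfe'.isIdempotentElem horth hsum).imp_right fun h ↦ ?_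
  rwa [h, add_zero] at hsum

lemma IsBlockIdemOn.mul_eq_self_of_mul_eq_self (he : IsBlockIdemOn (S : Set B) e)
    (hf : IsCentralIdemOn (S : Set B) f) (hc : c ≠ 0) (hec : e * c = c) (hfc : f * c = c) :
    f * e = e := by
  refine (he.mul_eq_zero_or_mul_eq_self hf).resolve_left fun h ↦ hc ?_
  rw [← hfc, ← hec, ← mul_assoc, h, zero_mul]

lemma exists_least_isCentralIdemOn_mul_eq_self
    (hfin : {f | IsCentralIdemOn (S : Set B) f}.Finite) (c : B) :
    ∃ e, IsCentralIdemOn (S : Set B) e ∧ e * c = c ∧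
      ∀ f, IsCentralIdemOn (S : Set B) f → f * c = c → e * f = e := by
  suffices H : ∀ T ⊆ {f | IsCentralIdemOn (S : Set B) f ∧ f * c = c}, T.Finite →
      ∃ e, IsCentralIdemOn (S : Set B) e ∧ e * c = c ∧ ∀ f ∈ T, e * f = e by
    obtain ⟨e, he, hec, hmin⟩ := H _ subset_rfl (hfin.subset fun f hf ↦ hf.1)
    exact ⟨e, he, hec, fun f hf hfc ↦ hmin f ⟨hf, hfc⟩⟩
  intro T hT hTfin
  induction T, hTfin using Set.Finite.induction_on with
  | empty => exact ⟨1, .one, one_mul c, fun _ h ↦ h.elim⟩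
  | @insert g T _ _ ih =>
    obtain ⟨⟨hg, hgc⟩, hT⟩ := Set.insert_subset_iff.mp hT
    obtain ⟨e, he, hec, hmin⟩ := ih hT
    refine ⟨g * e, hg.mul he, by rw [mul_assoc, hec, hgc], ?_⟩
    rintro f (rfl | hf)
    · rw [mul_assoc, ← hg.comm e he.mem, ← mul_assoc, hg.isIdempotentElem.eq]
    · rw [mul_assoc, hmin f hf]

lemma exists_isBlockIdemOn_mul_eq_self (hfin : {f | IsCentralIdemOn (S : Set B) f}.Finite)
    (hc : c ≠ 0) (hdich : ∀ f, IsCentralIdemOn (S : Set B) f → f * c = 0 ∨ f * c = c) :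
    ∃ e, IsBlockIdemOn (S : Set B) e ∧ e * c = c := by
  obtain ⟨e, he, hec, hmin⟩ := exists_least_isCentralIdemOn_mul_eq_self hfin c
  refine ⟨e, ⟨he.mem, he.isIdempotentElem, ?_, he.comm, ?_⟩, hec⟩
  · rintro rfl
    exact hc (by rw [← hec, zero_mul])
  · intro f g hfS hgS hfcomm hgcomm hf hg hfg hsum
    rcases hdich f ⟨hfS, hf, hfcomm⟩ with hfc | hfc
    · left
      have hgc : g * c = c := by rwa [← hsum, add_mul, hfc, zero_add] at hec
      have hge : g = e := by
        rw [← hmin g ⟨hgS, hg, hgcomm⟩ hgc, ← hsum, add_mul, hfg, hg.eq, zero_add]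
      rwa [hge, add_eq_right] at hsum
    · right
      have hfe : f = e := by
        rw [← hmin f ⟨hfS, hf, hfcomm⟩ hfc, ← hsum, add_mul, hf.eq, ← hfcomm g hgS, hfg, add_zero]
      rwa [hfe, add_eq_left] at hsum

lemma exists_isBlockIdemOn_mul_eq_self_and_iff (hS : (S : Set B).centralizer ⊆ Set.center B)
    (hfin : {f : B | IsCentralIdemOn Set.univ f}.Finite) (hc : IsBlockIdem c) :
    (∃ e, IsBlockIdemOn (S : Set B) e ∧ e * c = c ∧ e * d = d) ↔
      ∀ f, IsCentralIdemOn (S : Set B) f → f * c = c → f * d = d := by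
  have hcentral {f : B} (hf : IsCentralIdemOn (S : Set B) f) : IsCentralIdemOn Set.univ f :=
    ((isCentralIdemOn_iff_of_centralizer_subset_center hS).mp hf).2
  constructor
  · rintro ⟨e, he, hec, hed⟩ f hf hfc
    have hfe : f * e = e := he.mul_eq_self_of_mul_eq_self hf hc.ne_zero hec hfc
    rw [← hed, ← mul_assoc, hfe]
  · intro H
    obtain ⟨e, he, hec⟩ := exists_isBlockIdemOn_mul_eq_self (hfin.subset fun _ ↦ hcentral)
      hc.ne_zero fun f hf ↦ IsBlockIdemOn.mul_eq_zero_or_mul_eq_self (S := ⊤) hc (hcentral hf)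
    exact ⟨e, he, hec, H e he.isCentralIdemOn hec⟩

end Blocks

section Localization

/-- The image of `A_p` in `A^K` as a bundled subring, with carrier `localizedAt R A p`. -/
def localizedSubring (p : PrimeSpectrum R) : Subring (FractionRing R ⊗[R] A) where
  carrier := localizedAt R A p
  zero_mem' := ⟨0, 1, p.asIdeal.one_notMem, by rw [smul_zero, map_zero]⟩
  one_mem' := ⟨1, 1, p.asIdeal.one_notMem, by rw [one_smul, map_one]⟩
  neg_mem' := by
    rintro x ⟨a, s, hs, ha⟩
    exact ⟨-a, s, hs, by rw [smul_neg, ha, map_neg]⟩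
  add_mem' := by
    rintro x y ⟨a, s, hs, ha⟩ ⟨b, t, ht, hb⟩
    refine ⟨t • a + s • b, s * t, p.2.mul_notMem hs ht, ?_⟩
    rw [map_add, map_smul, map_smul, ← ha, ← hb, smul_add, smul_smul, smul_smul, mul_comm s t]
  mul_mem' := by
    rintro x y ⟨a, s, hs, ha⟩ ⟨b, t, ht, hb⟩
    refine ⟨a * b, s * t, p.2.mul_notMem hs ht, ?_⟩
    rw [map_mul, ← ha, ← hb, smul_mul_smul_comm]

variable {R A}

lemma centralizer_localizedAt_subset_center (p : PrimeSpectrum R) :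
    (localizedAt R A p).centralizer ⊆ Set.center (FractionRing R ⊗[R] A) := by
  intro z hz
  refine Semigroup.mem_center_iff.mpr fun x ↦ ?_
  let ι := TensorProduct.mk R (FractionRing R) A 1
  obtain ⟨⟨a, s⟩, hsx⟩ := IsLocalizedModule.surj (nonZeroDivisors R) ι x
  have hmem : s • x ∈ localizedAt R A p :=
    ⟨a, 1, p.asIdeal.one_notMem, by rw [one_smul]; exact hsx⟩
  apply IsLocalizedModule.smul_injective ι s
  simpa only [smul_mul_assoc, mul_smul_comm] using hz _ hmem

lemma isOpen_setOf_mem_localizedAt (x : FractionRing R ⊗[R] A) :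
    IsOpen {q : PrimeSpectrum R | x ∈ localizedAt R A q} := by
  refine isOpen_iff_forall_mem_open.mpr fun q ⟨a, s, hs, ha⟩ ↦ ?_
  exact ⟨PrimeSpectrum.basicOpen s, fun _ hs' ↦ ⟨a, s, hs', ha⟩,
    PrimeSpectrum.isOpen_basicOpen, hs⟩

lemma isOpen_setOf_isCentralIdemOn_localizedAt (f : FractionRing R ⊗[R] A) :
    IsOpen {q : PrimeSpectrum R | IsCentralIdemOn (localizedAt R A q) f} := by
  have hiff (q : PrimeSpectrum R) : IsCentralIdemOn (localizedAt R A q) f ↔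
      f ∈ localizedAt R A q ∧ IsCentralIdemOn Set.univ f :=
    isCentralIdemOn_iff_of_centralizer_subset_center (centralizer_localizedAt_subset_center q)
  simp only [hiff]
  exact (isOpen_setOf_mem_localizedAt f).inter isOpen_const

variable [Module.Finite (FractionRing R) (FractionRing R ⊗[R] A)]
  {c : FractionRing R ⊗[R] A}

lemma inSameBlockAt_iff (p : PrimeSpectrum R) (hc : IsBlockIdem c) (d : FractionRing R ⊗[R] A) :
    inSameBlockAt R A p c d ↔
      ∀ f, IsCentralIdemOn (localizedAt R A p) f → f * c = c → f * d = d :=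
  exists_isBlockIdemOn_mul_eq_self_and_iff (S := localizedSubring R A p)
    (centralizer_localizedAt_subset_center p)
    (finite_setOf_isCentralIdemOn_univ (FractionRing R)) hc

lemma isClosed_setOf_inSameBlockAt (hc : IsBlockIdem c) (d : FractionRing R ⊗[R] A) :
    IsClosed {q : PrimeSpectrum R | inSameBlockAt R A q c d} := by
  simp only [inSameBlockAt_iff _ hc, Set.ofPred_forall]
  exact isClosed_iInter fun f ↦
    isClosed_imp (isOpen_setOf_isCentralIdemOn_localizedAt f) isClosed_const

end Localization

section Stratification

/-- The skeleton `Γ_A^≤(γ_A(p₀))`: the primes `q` whose partition `γ_A(q)` is coarser than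
`γ_A(p₀)`, partitions being encoded as relations on the block idempotents of `A^K`. -/
def blockSkeleton (p₀ : PrimeSpectrum R) : Set (PrimeSpectrum R) :=
  {q | ∀ c d : FractionRing R ⊗[R] A,
    IsBlockIdem c → IsBlockIdem d → inSameBlockAt R A p₀ c d → inSameBlockAt R A q c d}

/-- The stratum `Γ_A(γ_A(p₀))`: the primes `q` with `γ_A(q) = γ_A(p₀)`, partitions being encoded as
relations on the block idempotents of `A^K`. -/
def blockStratum (p₀ : PrimeSpectrum R) : Set (PrimeSpectrum R) :=
  {q | ∀ c d : FractionRing R ⊗[R] A,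
    IsBlockIdem c → IsBlockIdem d → (inSameBlockAt R A p₀ c d ↔ inSameBlockAt R A q c d)}

variable [Module.Finite (FractionRing R) (FractionRing R ⊗[R] A)] (p₀ : PrimeSpectrum R)

lemma isClosed_blockSkeleton : IsClosed (blockSkeleton R A p₀) := by
  simp only [blockSkeleton, Set.ofPred_forall]
  exact isClosed_iInter fun c ↦ isClosed_iInter fun d ↦ isClosed_iInter fun hc ↦
    isClosed_iInter fun _ ↦ isClosed_iInter fun _ ↦ isClosed_setOf_inSameBlockAt hc d

lemma exists_isOpen_blockStratum_eq_inter_blockSkeleton :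
    ∃ U : Set (PrimeSpectrum R), IsOpen U ∧ blockStratum R A p₀ = U ∩ blockSkeleton R A p₀ := by
  let blocks := {c : FractionRing R ⊗[R] A | IsBlockIdem c}
  have hfin : blocks.Finite := (finite_setOf_isCentralIdemOn_univ (FractionRing R)).subset
    fun _ hc ↦ IsBlockIdemOn.isCentralIdemOn hc
  refine ⟨⋂ c ∈ blocks, ⋂ d ∈ blocks, {q | inSameBlockAt R A q c d → inSameBlockAt R A p₀ c d},
    hfin.isOpen_biInter fun c hc ↦ hfin.isOpen_biInter fun d _ ↦ ?_, ?_⟩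
  · simp only [imp_iff_not_or]
    exact (isClosed_setOf_inSameBlockAt hc d).isOpen_compl.union isOpen_const
  · ext q
    simp only [blockStratum, blockSkeleton, blocks, Set.mem_inter_iff, Set.mem_iInter,
      Set.mem_ofPred_eq]
    grind

theorem stmt1_general :
    IsClosed (blockSkeleton R A p₀) ∧
    (∃ U : Set (PrimeSpectrum R), IsOpen U ∧
      blockStratum R A p₀ = U ∩ blockSkeleton R A p₀) ∧
    IsLocallyClosed (blockStratum R A p₀) := by
  have hclosed := isClosed_blockSkeleton R A p₀
  obtain ⟨U, hU, hstratum⟩ := exists_isOpen_blockStratum_eq_inter_blockSkeleton R A p₀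
  exact ⟨hclosed, ⟨U, hU, hstratum⟩, U, _, hU, hclosed, hstratum⟩

end Stratification

/-- **Lower semicontinuity of the local block structure** (Theorem `block_stratification_thm`).
For `P = γ_A(p₀)` a local block structure of `A`, the skeleton
`Γ_A^≤(P) = {q | γ_A(q) ≤ γ_A(p₀)}` is closed, and the stratum
`Γ_A(P) = {q | γ_A(q) = γ_A(p₀)}` is open in the skeleton, hence locally closed. -/
theorem stmt1 [Module.Finite R A] [Module.Flat R A] [Module.FinitePresentation R A]
    (p₀ : PrimeSpectrum R) :
    IsClosed {q : PrimeSpectrum R | ∀ c d : FractionRing R ⊗[R] A,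
        IsBlockIdem c → IsBlockIdem d → inSameBlockAt R A p₀ c d → inSameBlockAt R A q c d} ∧
    (∃ U : Set (PrimeSpectrum R), IsOpen U ∧
      {q : PrimeSpectrum R | ∀ c d : FractionRing R ⊗[R] A,
        IsBlockIdem c → IsBlockIdem d → (inSameBlockAt R A p₀ c d ↔ inSameBlockAt R A q c d)} =
      U ∩ {q : PrimeSpectrum R | ∀ c d : FractionRing R ⊗[R] A,
        IsBlockIdem c → IsBlockIdem d → inSameBlockAt R A p₀ c d → inSameBlockAt R A q c d}) ∧
    IsLocallyClosed {q : PrimeSpectrum R | ∀ c d : FractionRing R ⊗[R] A,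
        IsBlockIdem c → IsBlockIdem d →
          (inSameBlockAt R A p₀ c d ↔ inSameBlockAt R A q c d)} :=
  stmt1_general R A p₀
end

section
/- Let A be a ring with center Z such that Z is noetherian and A is finitely generated as a Z-module. Let 𝔷 be a two-sided ideal of A generated by central elements such that the quotient ring A/𝔷 has classical Krull dimension zero, i.e., there are no strict inclusions between prime two-sided ideals of A/𝔷. Then the inclusion of the central subring (Z + 𝔷)/𝔷 into A/𝔷 is block bijective; in other words, every centrally-primitive idempotent of A/𝔷 is the image of an element of Z. -/
section BlockDefs
variable {B : Type*} [Ring B]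

/-- A two-sided ideal `P` is prime if `P ≠ A` and `IJ ⊆ P` implies `I ⊆ P` or `J ⊆ P` for all
two-sided ideals `I, J`. -/
def TwoSidedIdeal.IsPrimeIdeal (P : TwoSidedIdeal B) : Prop :=
  P ≠ ⊤ ∧ ∀ I J : TwoSidedIdeal B, (∀ x ∈ I, ∀ y ∈ J, x * y ∈ P) → I ≤ P ∨ J ≤ P

end BlockDefs

/-!
Write `𝔷 = IA` for an ideal `I` of the center `Z`, and let `e` be a central idempotent of `A/𝔷`.
For every `n` the ring `C = A/IⁿA` has a central idempotent over `e`: an idempotent `f` over `e`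
exists because `IC` is nilpotent, and `f` is central because the Peirce projections
`x ↦ f * x * (1 - f)` and `x ↦ (1 - f) * x * f` are `Z`-linear, idempotent and have image in `IC`,
hence in every `IᵏC`.
So `e` is the image of some `b ∈ A` whose commutators all lie in `IⁿA`.
Since `Z` is the kernel of a `Z`-linear map `A → Aᵐ` (the commutators with `m` generators), the
Artin–Rees lemma says that for `n` large such a `b` lies in `IA + Z`.
-/

section IdealMultiples
variable {R M N : Type*} [CommRing R] [AddCommGroup M] [Module R M] [AddCommGroup N] [Module R N]
  (I : Ideal R)

theorem mem_ideal_smul_top_pi {ι : Type*} [Finite ι] {v : ι → M}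
    (hv : ∀ i, v i ∈ I • (⊤ : Submodule R M)) : v ∈ I • (⊤ : Submodule R (ι → M)) := by
  classical
  cases nonempty_fintype ι
  rw [← Finset.univ_sum_single v]
  exact sum_mem fun i _ ↦
    Submodule.smul_top_le_comap_smul_top I (LinearMap.single R (fun _ ↦ M) i) (hv i)

theorem map_ideal_smul_top_of_surjective {f : M →ₗ[R] N} (hf : Function.Surjective f) :
    (I • ⊤ : Submodule R M).map f = I • ⊤ := by
  rw [Submodule.map_smul'', Submodule.map_top, LinearMap.range_eq_top.mpr hf]

theorem exists_comap_pow_smul_top_le_sup_ker [IsNoetherianRing R] [Module.Finite R N]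
    (f : M →ₗ[R] N) :
    ∃ k : ℕ, (I ^ (k + 1) • (⊤ : Submodule R N)).comap f ≤ I • ⊤ ⊔ LinearMap.ker f := by
  obtain ⟨k, artin_rees⟩ := I.exists_pow_inf_eq_pow_smul (LinearMap.range f)
  have hk : I ^ (k + 1) • ⊤ ⊓ LinearMap.range f ≤ (I • ⊤ : Submodule R M).map f := by
    rw [artin_rees (k + 1) k.le_succ, Nat.add_sub_cancel_left, pow_one, Submodule.map_smul'',
      Submodule.map_top]
    exact smul_mono_right I inf_le_right
  refine ⟨k, fun x hx ↦ ?_⟩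
  obtain ⟨y, hy, hyx⟩ := hk ⟨hx, LinearMap.mem_range_self f x⟩
  have hker : x - y ∈ LinearMap.ker f := by rw [LinearMap.mem_ker, map_sub, hyx, sub_self]
  exact Submodule.mem_sup.mpr ⟨y, hy, x - y, hker, add_sub_cancel y x⟩

theorem range_le_pow_smul_top_of_isIdempotentElem {f : Module.End R M}
    (hf : IsIdempotentElem f) (hI : LinearMap.range f ≤ I • ⊤) (n : ℕ) :
    LinearMap.range f ≤ I ^ n • ⊤ := by
  induction n with
  | zero => simp
  | succ n ih =>
    calc LinearMap.range f
        = (LinearMap.range f).map f := by rw [← LinearMap.range_comp, ← Module.End.mul_eq_comp, hf]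
      _ ≤ (I • ⊤ : Submodule R M).map f := Submodule.map_mono hI
      _ = I • LinearMap.range f := by rw [Submodule.map_smul'', LinearMap.range_eq_map]
      _ ≤ I • I ^ n • ⊤ := smul_mono_right I ih
      _ = I ^ (n + 1) • ⊤ := by rw [pow_succ', Submodule.mul_smul]

end IdealMultiples

section Algebra
variable {R A : Type*} [CommRing R] [Ring A] [Algebra R A] (I : Ideal R)

theorem mul_mem_ideal_smul_top_left (a : A) {x : A} (hx : x ∈ I • (⊤ : Submodule R A)) :
    a * x ∈ I • (⊤ : Submodule R A) :=
  Submodule.smul_top_le_comap_smul_top I (LinearMap.mulLeft R a) hx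

theorem mul_mem_ideal_smul_top_right (a : A) {x : A} (hx : x ∈ I • (⊤ : Submodule R A)) :
    x * a ∈ I • (⊤ : Submodule R A) :=
  Submodule.smul_top_le_comap_smul_top I (LinearMap.mulRight R a) hx

theorem pow_mem_pow_smul_top {x : A} (hx : x ∈ I • (⊤ : Submodule R A)) (n : ℕ) :
    x ^ n ∈ I ^ n • (⊤ : Submodule R A) := by
  induction n with
  | zero => simp
  | succ n ih =>
    rw [pow_succ x, pow_succ' I, Submodule.mul_smul]
    have hmap : (I • ⊤ : Submodule R A).map (LinearMap.mulLeft R (x ^ n)) ≤ I • I ^ n • ⊤ := by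
      rw [Submodule.map_smul'']
      refine smul_mono_right I ?_
      rintro _ ⟨y, -, rfl⟩
      exact mul_mem_ideal_smul_top_right _ y ih
    exact hmap (Submodule.mem_map_of_mem hx)

theorem mem_twoSidedIdeal_span_algebraMap_image_iff (T : Set R) {x : A} :
    x ∈ TwoSidedIdeal.span (algebraMap R A '' T) ↔
      x ∈ Ideal.span T • (⊤ : Submodule R A) := by
  constructor
  · intro hx
    let J : TwoSidedIdeal A := .mk' (Ideal.span T • ⊤ : Submodule R A) (zero_mem _) add_mem neg_mem
      (mul_mem_ideal_smul_top_left _ _) (mul_mem_ideal_smul_top_right _ _)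
    suffices hJ : TwoSidedIdeal.span (algebraMap R A '' T) ≤ J by simpa [J] using hJ hx
    rw [TwoSidedIdeal.span_le]
    rintro _ ⟨t, ht, rfl⟩
    rw [SetLike.mem_coe, TwoSidedIdeal.mem_mk', Algebra.algebraMap_eq_smul_one]
    exact Submodule.smul_mem_smul (Ideal.subset_span ht) trivial
  · have hspan : Ideal.span T ≤
        (TwoSidedIdeal.span (algebraMap R A '' T)).asIdeal.comap (algebraMap R A) :=
      Ideal.span_le.mpr fun t ht ↦ TwoSidedIdeal.subset_span (Set.mem_image_of_mem _ ht)
    intro hx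
    induction hx using Submodule.smul_induction_on' with
    | smul r hr a _ =>
      rw [Algebra.smul_def]
      exact TwoSidedIdeal.mul_mem_right _ _ _ (hspan hr)
    | add a _ b _ ha hb => exact add_mem ha hb

theorem mkₐ_span_algebraMap_image_eq_zero_iff {x : A} :
    (TwoSidedIdeal.span (algebraMap R A '' I)).ringCon.mkₐ R x = 0 ↔
      x ∈ I • (⊤ : Submodule R A) := by
  rw [← Ideal.span_eq I, ← mem_twoSidedIdeal_span_algebraMap_image_iff, Ideal.span_eq]
  exact RingCon.eq _

/-- The algebra structure of a ring over its center, with the scalar action Mathlib has on modules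
over subalgebras. -/
instance algebraOverCenter : Algebra (Subalgebra.center R A) A where
  algebraMap := (Subalgebra.center R A).val
  commutes' c a := (Subalgebra.mem_center_iff.mp c.2 a).symm
  smul_def' _ _ := rfl

theorem exists_ideal_forall_mem_iff_mem_smul_top {z : TwoSidedIdeal A}
    (hz : ∃ S : Set A, S ⊆ Set.center A ∧ z = TwoSidedIdeal.span S) :
    ∃ I : Ideal (Subalgebra.center R A),
      ∀ x, x ∈ z ↔ x ∈ I • (⊤ : Submodule (Subalgebra.center R A) A) := by
  obtain ⟨S, hS, rfl⟩ := hz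
  have himage : algebraMap (Subalgebra.center R A) A '' (Subtype.val ⁻¹' S) = S :=
    (Subtype.image_preimage_coe _ S).trans (Set.inter_eq_right.mpr hS)
  refine ⟨Ideal.span (Subtype.val ⁻¹' S), fun x ↦ ?_⟩
  rw [← mem_twoSidedIdeal_span_algebraMap_image_iff, himage]

end Algebra

section CentralIdempotents
variable {R A B : Type*} [CommRing R] [Ring A] [Algebra R A] [Ring B] (I : Ideal R)

theorem isIdempotentElem_mulLeft_mul_mulRight {e f : A} (he : IsIdempotentElem e)
    (hf : IsIdempotentElem f) :
    IsIdempotentElem (LinearMap.mulLeft R e * LinearMap.mulRight R f) := by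
  ext x
  simp [mul_assoc, hf.eq, he.mul_self_mul]

theorem lie_mem_pow_smul_top_of_isIdempotentElem {e : A} (he : IsIdempotentElem e)
    (hI : ∀ x : A, ⁅e, x⁆ ∈ I • (⊤ : Submodule R A)) (n : ℕ) (x : A) :
    ⁅e, x⁆ ∈ I ^ n • (⊤ : Submodule R A) := by
  have upper_corner : LinearMap.range (LinearMap.mulLeft R e * LinearMap.mulRight R (1 - e)) ≤
      I • ⊤ := by
    rintro _ ⟨y, rfl⟩
    have : e * (y * (1 - e)) = ⁅e, y⁆ * (1 - e) := by
      rw [Ring.lie_def, sub_mul, mul_assoc y, he.mul_one_sub_self, mul_zero, sub_zero, mul_assoc]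
    change e * (y * (1 - e)) ∈ _
    rw [this]
    exact mul_mem_ideal_smul_top_right I (1 - e) (hI y)
  have lower_corner : LinearMap.range (LinearMap.mulLeft R (1 - e) * LinearMap.mulRight R e) ≤
      I • ⊤ := by
    rintro _ ⟨y, rfl⟩
    have : (1 - e) * (y * e) = -((1 - e) * ⁅e, y⁆) := by
      rw [Ring.lie_def, mul_sub, ← mul_assoc _ e, he.one_sub_mul_self, zero_mul, zero_sub, neg_neg]
    change (1 - e) * (y * e) ∈ _
    rw [this]
    exact neg_mem (mul_mem_ideal_smul_top_left I (1 - e) (hI y))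
  have hlie : ⁅e, x⁆ = e * (x * (1 - e)) - (1 - e) * (x * e) := by
    rw [Ring.lie_def]; noncomm_ring
  rw [hlie]
  exact sub_mem
    (range_le_pow_smul_top_of_isIdempotentElem I
      (isIdempotentElem_mulLeft_mul_mulRight he he.one_sub) upper_corner n ⟨x, rfl⟩)
    (range_le_pow_smul_top_of_isIdempotentElem I
      (isIdempotentElem_mulLeft_mul_mulRight he.one_sub he) lower_corner n ⟨x, rfl⟩)

theorem exists_mem_center_map_eq_of_pow_smul_top_eq_bot {φ : A →+* B}
    (hφ : Function.Surjective φ) (hker : ∀ x, φ x = 0 → x ∈ I • (⊤ : Submodule R A)) {n : ℕ}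
    (hn : I ^ n • (⊤ : Submodule R A) = ⊥) {e : B} (he : IsIdempotentElem e)
    (hc : e ∈ Set.center B) : ∃ c ∈ Set.center A, φ c = e := by
  obtain ⟨c, hc_idem, rfl⟩ := exists_isIdempotentElem_eq_of_ker_isNilpotent φ
    (fun x hx ↦ ⟨n, by simpa [hn] using pow_mem_pow_smul_top I (hker x hx) n⟩) e (hφ e) he
  have hlie (x : A) : ⁅c, x⁆ ∈ I • (⊤ : Submodule R A) :=
    hker _ (by rw [Ring.lie_def, map_sub, map_mul, map_mul, hc.comm, sub_self])
  refine ⟨c, Semigroup.mem_center_iff.mpr fun x ↦ ?_, rfl⟩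
  have := lie_mem_pow_smul_top_of_isIdempotentElem I hc_idem hlie n x
  rw [hn, Submodule.mem_bot, ← commute_iff_lie_eq] at this
  exact this.symm

theorem exists_map_eq_forall_lie_mem_pow_smul_top {φ : A →+* B} (hφ : Function.Surjective φ)
    (hker : ∀ x, φ x = 0 ↔ x ∈ I • (⊤ : Submodule R A)) {e : B} (he : IsIdempotentElem e)
    (hc : e ∈ Set.center B) (k : ℕ) :
    ∃ b, φ b = e ∧ ∀ x, ⁅b, x⁆ ∈ I ^ (k + 1) • (⊤ : Submodule R A) := by
  let J : TwoSidedIdeal A := TwoSidedIdeal.span (algebraMap R A '' (I ^ (k + 1) : Ideal R))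
  have hπ : Function.Surjective (J.ringCon.mkₐ R) := RingCon.mkₐ_surjective _
  have hπ_ker (x : A) : J.ringCon.mkₐ R x = 0 ↔ x ∈ I ^ (k + 1) • (⊤ : Submodule R A) :=
    mkₐ_span_algebraMap_image_eq_zero_iff _
  have hJ : J.ringCon ≤ RingCon.ker φ := fun x y hxy ↦ by
    have hmem : x - y ∈ I ^ (k + 1) • (⊤ : Submodule R A) := by
      rw [← hπ_ker, map_sub, sub_eq_zero]
      exact (RingCon.eq _).mpr hxy
    rw [RingCon.ker_apply, ← sub_eq_zero, ← map_sub, hker]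
    exact Submodule.smul_mono_left (Ideal.pow_le_self k.succ_ne_zero) hmem
  have hlift_ker (y : J.ringCon.Quotient) (hy : J.ringCon.lift φ hJ y = 0) :
      y ∈ I • (⊤ : Submodule R J.ringCon.Quotient) := by
    obtain ⟨x, rfl⟩ := hπ y
    exact Submodule.smul_top_le_comap_smul_top I (J.ringCon.mkₐ R).toLinearMap ((hker x).mp hy)
  have hbot : I ^ (k + 1) • (⊤ : Submodule R J.ringCon.Quotient) = ⊥ := by
    rw [← map_ideal_smul_top_of_surjective _ (f := (J.ringCon.mkₐ R).toLinearMap) hπ,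
      eq_bot_iff, Submodule.map_le_iff_le_comap]
    exact fun x hx ↦ (hπ_ker x).mpr hx
  obtain ⟨c, hc_center, hc_lift⟩ := exists_mem_center_map_eq_of_pow_smul_top_eq_bot I
    (RingCon.lift_surjective_of_surjective hJ hφ) hlift_ker hbot he hc
  obtain ⟨b, rfl⟩ := hπ c
  refine ⟨b, hc_lift, fun x ↦ ?_⟩
  rw [← hπ_ker, Ring.lie_def, map_sub, map_mul, map_mul, hc_center.comm, sub_self]

variable (R) in
/-- The map `a ↦ (⁅a, s i⁆)ᵢ` of commutators with a family `s`. Its kernel is the center when `s`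
generates `A`, which makes the center accessible to the Artin–Rees lemma. -/
def commutatorMap {ι : Type*} (s : ι → A) : A →ₗ[R] ι → A :=
  LinearMap.pi fun i ↦ LinearMap.mulRight R (s i) - LinearMap.mulLeft R (s i)

theorem commutatorMap_apply {ι : Type*} (s : ι → A) (a : A) (i : ι) :
    commutatorMap R s a i = ⁅a, s i⁆ :=
  rfl

theorem mem_ker_commutatorMap_iff {ι : Type*} {s : ι → A}
    (hs : Submodule.span R (Set.range s) = ⊤) {a : A} :
    a ∈ LinearMap.ker (commutatorMap R s) ↔ a ∈ Set.center A := by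
  have hker : a ∈ LinearMap.ker (commutatorMap R s) ↔ ∀ i, Commute a (s i) := by
    simp only [LinearMap.mem_ker, funext_iff, commutatorMap_apply, Pi.zero_apply,
      commute_iff_lie_eq]
  rw [hker, Semigroup.mem_center_iff]
  refine ⟨fun h ↦ ?_, fun h i ↦ (h (s i)).symm⟩
  have hmul : LinearMap.mulLeft R a = LinearMap.mulRight R a := LinearMap.ext_on_range hs h
  exact fun x ↦ (LinearMap.congr_fun hmul x).symm

theorem exists_mem_center_map_eq [IsNoetherianRing R] [Module.Finite R A] {φ : A →+* B}
    (hφ : Function.Surjective φ) (hker : ∀ x, φ x = 0 ↔ x ∈ I • (⊤ : Submodule R A)) {e : B}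
    (he : IsIdempotentElem e) (hc : e ∈ Set.center B) : ∃ c ∈ Set.center A, φ c = e := by
  obtain ⟨m, s, hs⟩ := Module.Finite.exists_fin (R := R) (M := A)
  obtain ⟨k, hk⟩ := exists_comap_pow_smul_top_le_sup_ker I (commutatorMap R s)
  obtain ⟨b, rfl, hb⟩ := exists_map_eq_forall_lie_mem_pow_smul_top I hφ hker he hc k
  obtain ⟨y, hy, c, hc_ker, rfl⟩ :=
    Submodule.mem_sup.mp (hk (mem_ideal_smul_top_pi _ fun i ↦ hb (s i)))
  refine ⟨c, (mem_ker_commutatorMap_iff hs).mp hc_ker, ?_⟩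
  rw [map_add, (hker y).mpr hy, zero_add]

end CentralIdempotents

theorem image_center_subset_center {A B : Type*} [Ring A] [Ring B] {φ : A →+* B}
    (hφ : Function.Surjective φ) : φ '' Set.center A ⊆ Set.center B := by
  rintro _ ⟨c, hc, rfl⟩
  refine Semigroup.mem_center_iff.mpr fun y ↦ ?_
  obtain ⟨x, rfl⟩ := hφ y
  rw [← map_mul, ← map_mul, hc.comm]

theorem isBlockIdemOn_iff_isBlockIdem {B : Type*} [Ring B] {S : Set B} (hS : S ⊆ Set.center B)
    (hidem : ∀ e ∈ Set.center B, IsIdempotentElem e → e ∈ S) {e : B} :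
    IsBlockIdemOn S e ↔ IsBlockIdem e := by
  have hcomm : ∀ f ∈ S, ∀ x, f * x = x * f := fun f hf x ↦ (hS hf).comm x
  have hmem : ∀ f : B, IsIdempotentElem f → (∀ x, f * x = x * f) → f ∈ S := fun f hf hfc ↦
    hidem f (Semigroup.mem_center_iff.mpr fun x ↦ (hfc x).symm) hf
  simp only [IsBlockIdem, IsBlockIdemOn, Set.mem_univ, true_and, true_imp_iff]
  constructor
  · rintro ⟨he, he_idem, he_ne, -, hprim⟩
    refine ⟨he_idem, he_ne, hcomm e he, fun f g hf hg hf_idem hg_idem ↦ ?_⟩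
    exact hprim f g (hmem f hf_idem hf) (hmem g hg_idem hg) (fun x _ ↦ hf x) (fun x _ ↦ hg x)
      hf_idem hg_idem
  · rintro ⟨he_idem, he_ne, he, hprim⟩
    refine ⟨hmem e he_idem he, he_idem, he_ne, fun x _ ↦ he x, fun f g hf hg _ _ ↦ ?_⟩
    exact hprim f g (hcomm f hf) (hcomm g hg)

theorem stmt8_general (A : Type u) [Ring A]
    [IsNoetherianRing (Subalgebra.center ℤ A)] [Module.Finite (Subalgebra.center ℤ A) A]
    (z : TwoSidedIdeal A) (hz : ∃ S : Set A, S ⊆ Set.center A ∧ z = TwoSidedIdeal.span S) :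
    {e : z.ringCon.Quotient |
        IsBlockIdemOn (⇑(RingCon.mk' z.ringCon) '' Set.center A) e} =
      {e : z.ringCon.Quotient | IsBlockIdem e} := by
  obtain ⟨I, hI⟩ := exists_ideal_forall_mem_iff_mem_smul_top (R := ℤ) hz
  have hsurj : Function.Surjective (RingCon.mk' z.ringCon) := RingCon.mk'_surjective _
  have hker (x : A) : RingCon.mk' z.ringCon x = 0 ↔
      x ∈ I • (⊤ : Submodule (Subalgebra.center ℤ A) A) := by
    rw [← hI, ← TwoSidedIdeal.mem_ker, TwoSidedIdeal.ker_ringCon_mk']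
  ext e
  exact isBlockIdemOn_iff_isBlockIdem (image_center_subset_center hsurj) fun f hf hf_idem ↦
    exists_mem_center_map_eq I hsurj hker hf_idem hf

/-- **Müller's theorem** (`mueller_theorem_idempotents`). -/
theorem stmt8 (A : Type u) [Ring A]
    [IsNoetherianRing (Subalgebra.center ℤ A)] [Module.Finite (Subalgebra.center ℤ A) A]
    (z : TwoSidedIdeal A) (hz : ∃ S : Set A, S ⊆ Set.center A ∧ z = TwoSidedIdeal.span S)
    (hdim : ∀ P Q : TwoSidedIdeal z.ringCon.Quotient,
      P.IsPrimeIdeal → Q.IsPrimeIdeal → ¬ P < Q) :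
    {e : z.ringCon.Quotient |
        IsBlockIdemOn (⇑(RingCon.mk' z.ringCon) '' Set.center A) e} =
      {e : z.ringCon.Quotient | IsBlockIdem e} :=
  stmt8_general A z hz
end

section
/- Let R be a noetherian integral domain, let A be a finite flat R-algebra with center Z, and let p ∈ Spec(R). Let Z(p) := Z_p/p_pZ_p and let Z_p(A) := (Z_p + p_pA_p)/p_pA_p be the image of Z_p under the quotient map A_p → A(p) = A_p/p_pA_p. Then the canonical surjection φ_p: Z(p) → Z_p(A) is block bijective; in particular, no nonzero idempotent of Z(p) lies in the kernel of φ_p. -/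
open TensorProduct

noncomputable abbrev resFieldAt (R : Type*) [CommRing R] (p : PrimeSpectrum R) :=
  IsLocalRing.ResidueField (Localization.AtPrime p.asIdeal)

/-!
Since `A` is a finite faithful module over its center `Z`, its support is all of `Spec Z`. For
finite modules the support commutes with base change, so `K ⊗ A` has full support over `K ⊗ Z`
for every commutative `R`-algebra `K`, that is, the kernel of `K ⊗ Z → K ⊗ A` is nil. Idempotents
lift uniquely along a homomorphism with nil kernel, hence so do block decompositions.
-/

section Support

variable {R S : Type*} [CommRing R] [CommRing S] [Algebra R S]

theorem support_tensorProduct_eq_preimage_comap (M : Type*) [AddCommGroup M] [Module R M]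
    [Module.Finite R M] :
    Module.support S (S ⊗[R] M) =
      PrimeSpectrum.comap (algebraMap R S) ⁻¹' Module.support R M := by
  ext q
  let p := PrimeSpectrum.comap (algebraMap R S) q
  let κp := p.asIdeal.ResidueField
  let κq := q.asIdeal.ResidueField
  algebraize [Ideal.ResidueField.map p.asIdeal q.asIdeal (algebraMap R S) rfl]
  have : IsScalarTower R κp κq := .of_algebraMap_eq fun r ↦
    (Ideal.ResidueField.map_algebraMap p.asIdeal q.asIdeal (algebraMap R S) rfl r).symm
  let fiber_equiv : κq ⊗[S] (S ⊗[R] M) ≃ₗ[κq] κq ⊗[κp] (κp ⊗[R] M) :=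
    AlgebraTensorModule.cancelBaseChange R S κq κq M ≪≫ₗ
      (AlgebraTensorModule.cancelBaseChange R κp κq κq M).symm
  rw [Set.mem_preimage, Module.mem_support_iff_nontrivial_residueField_tensorProduct,
    Module.mem_support_iff_nontrivial_residueField_tensorProduct, fiber_equiv.nontrivial_congr,
    Module.FaithfullyFlat.nontrivial_tensorProduct_iff_right κp κq]

theorem ker_algebraMap_tensorProduct_le_nilradical (A : Type*) [Ring A] [Algebra R A]
    [Module.Finite R A] [FaithfulSMul R A] :
    RingHom.ker (algebraMap S (S ⊗[R] A)) ≤ nilradical S := by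
  have support_eq_univ : Module.support R A = Set.univ := by
    rw [Module.support_eq_zeroLocus, Module.annihilator_eq_bot.mpr inferInstance]
    exact PrimeSpectrum.zeroLocus_bot
  rw [nilradical, ← PrimeSpectrum.zeroLocus_subset_zeroLocus_iff, ← Module.support_of_algebra,
    support_tensorProduct_eq_preimage_comap, support_eq_univ, Set.preimage_univ]
  exact Set.subset_univ _

end Support

theorem ker_tensorProduct_map_toAlgHom_le_nilradical {R K Z A : Type*} [CommRing R]
    [CommRing K] [Algebra R K] [CommRing Z] [Algebra R Z] [Ring A] [Algebra R A] [Algebra Z A]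
    [IsScalarTower R Z A] [Module.Finite Z A] [FaithfulSMul Z A] :
    RingHom.ker (Algebra.TensorProduct.map (AlgHom.id R K) (IsScalarTower.toAlgHom R Z A)) ≤
      nilradical (K ⊗[R] Z) := by
  let : Algebra Z (K ⊗[R] Z) := Algebra.TensorProduct.rightAlgebra
  let toBaseChange : K ⊗[R] A →ₗ[R] (K ⊗[R] Z) ⊗[Z] A :=
    mapOfCompatibleSMul Z R R (K ⊗[R] Z) A ∘ₗ
      (Algebra.TensorProduct.includeLeft : K →ₐ[R] K ⊗[R] Z).toLinearMap.rTensor A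
  have toBaseChange_map (x : K ⊗[R] Z) :
      toBaseChange (Algebra.TensorProduct.map (AlgHom.id R K) (IsScalarTower.toAlgHom R Z A) x) =
        algebraMap (K ⊗[R] Z) ((K ⊗[R] Z) ⊗[Z] A) x := by
    induction x with
    | zero => simp only [map_zero]
    | add x y hx hy => simp only [map_add, hx, hy]
    | tmul k z =>
      have smul_tmul_one : z • (k ⊗ₜ[R] (1 : Z)) = k ⊗ₜ[R] z := by
        rw [Algebra.smul_def, Algebra.TensorProduct.right_algebraMap_apply,
          Algebra.TensorProduct.tmul_mul_tmul, one_mul, mul_one]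
      calc (k ⊗ₜ[R] (1 : Z)) ⊗ₜ[Z] algebraMap Z A z
        _ = (z • (k ⊗ₜ[R] (1 : Z))) ⊗ₜ[Z] (1 : A) := by
          rw [Algebra.algebraMap_eq_smul_one, TensorProduct.smul_tmul]
        _ = (k ⊗ₜ[R] z) ⊗ₜ[Z] (1 : A) := by rw [smul_tmul_one]
  intro x hx
  apply ker_algebraMap_tensorProduct_le_nilradical (R := Z) A
  rw [RingHom.mem_ker, ← toBaseChange_map, RingHom.mem_ker.mp hx, map_zero]

/-- `A` as an algebra over its center, with `algebraMap` the inclusion. Its scalar action is the one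
of `A` as a module over the subalgebra. -/
instance centerAlgebra (R A : Type*) [CommSemiring R] [Semiring A] [Algebra R A] :
    Algebra (Subalgebra.center R A) A where
  algebraMap := (Subalgebra.center R A).val
  commutes' z a := (Subalgebra.mem_center_iff.mp z.2 a).symm
  smul_def' _ _ := rfl

section NilKernel

variable {Z B : Type*} [CommRing Z] [Ring B] {φ : Z →+* B}

theorem injOn_isIdempotentElem_of_ker_le_nilradical (hφ : RingHom.ker φ ≤ nilradical Z) :
    Set.InjOn φ {e | IsIdempotentElem e} := fun _ he _ hf hef ↦
  eq_of_isNilpotent_sub_of_isIdempotentElem he hf <| hφ <| by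
    rw [RingHom.mem_ker, map_sub, hef, sub_self]

theorem eq_zero_of_map_eq_zero_of_isIdempotentElem (hφ : RingHom.ker φ ≤ nilradical Z) {e : Z}
    (he : IsIdempotentElem e) (h : φ e = 0) : e = 0 :=
  injOn_isIdempotentElem_of_ker_le_nilradical hφ he IsIdempotentElem.zero
    (h.trans (map_zero φ).symm)

theorem exists_orthogonal_isIdempotentElem_lift (hφ : RingHom.ker φ ≤ nilradical Z) {e : Z}
    (he : IsIdempotentElem e) {f g : B} (hf_mem : f ∈ Set.range φ) (hg_mem : g ∈ Set.range φ)
    (hf : IsIdempotentElem f) (hg : IsIdempotentElem g) (hfg : f * g = 0) (hsum : f + g = φ e) :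
    ∃ f' g' : Z, IsIdempotentElem f' ∧ IsIdempotentElem g' ∧ f' * g' = 0 ∧ f' + g' = e ∧
      φ f' = f ∧ φ g' = g := by
  obtain ⟨f', hf', rfl⟩ :=
    exists_isIdempotentElem_eq_of_ker_isNilpotent φ (fun _ hx ↦ hφ hx) f hf_mem hf
  obtain ⟨g', hg', rfl⟩ :=
    exists_isIdempotentElem_eq_of_ker_isNilpotent φ (fun _ hx ↦ hφ hx) g hg_mem hg
  have hfg' : f' * g' = 0 :=
    eq_zero_of_map_eq_zero_of_isIdempotentElem hφ (hf'.mul hg') (by rw [map_mul, hfg])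
  have hsum_idem : IsIdempotentElem (f' + g') :=
    hf'.add hg' (by rw [mul_comm g', hfg', add_zero])
  have hsum' : f' + g' = e :=
    injOn_isIdempotentElem_of_ker_le_nilradical hφ hsum_idem he (by rw [map_add, hsum])
  exact ⟨f', g', hf', hg', hfg', hsum', rfl, rfl⟩

theorem isBlockIdemOn_range_map_iff (hφ : RingHom.ker φ ≤ nilradical Z) {e : Z}
    (he : IsIdempotentElem e) : IsBlockIdemOn (Set.range φ) (φ e) ↔ IsBlockIdem e := by
  have map_central (z : Z) : ∀ x ∈ Set.range φ, φ z * x = x * φ z := by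
    rintro _ ⟨x, rfl⟩
    rw [← map_mul, mul_comm, map_mul]
  constructor
  · rintro ⟨-, -, hne, -, hprim⟩
    refine ⟨trivial, he, fun h ↦ hne (by rw [h, map_zero]), fun x _ ↦ mul_comm e x, ?_⟩
    intro f g _ _ _ _ hf hg hfg hsum
    exact (hprim (φ f) (φ g) ⟨f, rfl⟩ ⟨g, rfl⟩ (map_central f) (map_central g) (hf.map φ) (hg.map φ)
      (by rw [← map_mul, hfg, map_zero]) (by rw [← map_add, hsum])).imp
      (eq_zero_of_map_eq_zero_of_isIdempotentElem hφ hf)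
      (eq_zero_of_map_eq_zero_of_isIdempotentElem hφ hg)
  · rintro ⟨-, -, hne, -, hprim⟩
    refine ⟨⟨e, rfl⟩, he.map φ,
      fun h ↦ hne (eq_zero_of_map_eq_zero_of_isIdempotentElem hφ he h), map_central e, ?_⟩
    intro f g hf_mem hg_mem _ _ hf hg hfg hsum
    obtain ⟨f', g', hf', hg', hfg', hsum', rfl, rfl⟩ :=
      exists_orthogonal_isIdempotentElem_lift hφ he hf_mem hg_mem hf hg hfg hsum
    exact (hprim f' g' trivial trivial (fun x _ ↦ mul_comm f' x) (fun x _ ↦ mul_comm g' x)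
      hf' hg' hfg' hsum').imp (fun h ↦ by rw [h, map_zero]) (fun h ↦ by rw [h, map_zero])

theorem bijOn_isBlockIdem_of_ker_le_nilradical (hφ : RingHom.ker φ ≤ nilradical Z) :
    Set.BijOn φ {e | IsBlockIdem e} {e | IsBlockIdemOn (Set.range φ) e} := by
  refine ⟨fun e he ↦ (isBlockIdemOn_range_map_iff hφ he.2.1).mpr he,
    (injOn_isIdempotentElem_of_ker_le_nilradical hφ).mono fun e he ↦ he.2.1, fun e he ↦ ?_⟩
  obtain ⟨e', he', rfl⟩ :=
    exists_isIdempotentElem_eq_of_ker_isNilpotent φ (fun _ hx ↦ hφ hx) e he.1 he.2.1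
  exact ⟨e', (isBlockIdemOn_range_map_iff hφ he').mp he, rfl⟩

end NilKernel

theorem stmt10_general (R K A : Type*) [CommRing R] [CommRing K] [Algebra R K]
    [Ring A] [Algebra R A] [Module.Finite (Subalgebra.center R A) A] :
    Set.BijOn
      (Algebra.TensorProduct.map (AlgHom.id R K) (Subalgebra.center R A).val)
      {e | IsBlockIdem e}
      {e | IsBlockIdemOn
        (Set.range (Algebra.TensorProduct.map (AlgHom.id R K) (Subalgebra.center R A).val)) e} ∧
    ∀ e : K ⊗[R] Subalgebra.center R A, IsIdempotentElem e →
      Algebra.TensorProduct.map (AlgHom.id R K) (Subalgebra.center R A).val e = 0 → e = 0 := by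
  have : FaithfulSMul (Subalgebra.center R A) A :=
    (faithfulSMul_iff_algebraMap_injective _ _).mpr Subtype.val_injective
  let φ := (Algebra.TensorProduct.map (AlgHom.id R K) (Subalgebra.center R A).val).toRingHom
  have hφ : RingHom.ker φ ≤ nilradical (K ⊗[R] Subalgebra.center R A) :=
    ker_tensorProduct_map_toAlgHom_le_nilradical
  exact ⟨bijOn_isBlockIdem_of_ker_le_nilradical hφ,
    fun _ ↦ eq_zero_of_map_eq_zero_of_isIdempotentElem hφ⟩

/-- **Lemma `center_reduction_block_bijective`.** For a finite flat algebra `A` over a noetherian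
domain `R` with center `Z`, the canonical surjection `φ_p : Z(p) = κ(p) ⊗[R] Z → Z_p(A)`, where
`Z_p(A)` is the image of `Z(p)` in `A(p) = κ(p) ⊗[R] A`, is block bijective; in particular no
nonzero idempotent of `Z(p)` lies in its kernel. -/
theorem stmt10 (R : Type u) [CommRing R] [IsDomain R] [IsNoetherianRing R]
    (A : Type u) [Ring A] [Algebra R A] [Module.Finite R A] [Module.Flat R A]
    (p : PrimeSpectrum R) :
    Set.BijOn
      ⇑(Algebra.TensorProduct.map (AlgHom.id R (resFieldAt R p)) (Subalgebra.center R A).val :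
        resFieldAt R p ⊗[R] (Subalgebra.center R A) →ₐ[R] resFieldAt R p ⊗[R] A)
      {e : resFieldAt R p ⊗[R] (Subalgebra.center R A) | IsBlockIdem e}
      {e : resFieldAt R p ⊗[R] A | IsBlockIdemOn
        (Set.range ⇑(Algebra.TensorProduct.map (AlgHom.id R (resFieldAt R p))
          (Subalgebra.center R A).val :
            resFieldAt R p ⊗[R] (Subalgebra.center R A) →ₐ[R] resFieldAt R p ⊗[R] A)) e} ∧
    ∀ e : resFieldAt R p ⊗[R] (Subalgebra.center R A), IsIdempotentElem e →
      Algebra.TensorProduct.map (AlgHom.id R (resFieldAt R p)) (Subalgebra.center R A).val e = 0 →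
      e = 0 := by
  have : Module.Finite (Subalgebra.center R A) A := .of_restrictScalars_finite R _ A
  exact stmt10_general R (resFieldAt R p) A
end

section
/- Let φ: R → S be a morphism of commutative rings, let A be an R-algebra such that the induced map φ_A: A → A^S = S ⊗_R A sends every nonzero central idempotent of A to a nonzero element, and let {c_i}_{i∈I} be a finite set of pairwise orthogonal nonzero central idempotents of A with Σ_{i∈I} c_i = 1. Let V be a nonzero A-module belonging to c_i, i.e., c_iV = V and c_jV = 0 for j ≠ i. In each of the following cases, the A^S-module V^S = S ⊗_R V is nonzero and belongs to φ_A(c_i): (a) φ is injective and V is projective as an R-module; (b) φ is faithfully flat; (c) R is local or a principal ideal domain and V is free as an R-module. -/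
open TensorProduct

/-!
The action of `1 ⊗ c j` on `S ⊗[R] V` is the base change of that of `c j` on `V`, and base change
preserves the identity and zero, so only the nonvanishing of `S ⊗[R] V` is at stake. If `φ` is
injective and `V` is flat, then `V → S ⊗[R] V` is injective; otherwise one of the two factors is
faithfully flat over `R` and the other one is nonzero. A nonzero free module is faithfully flat,
and `S` is nonzero because `φ_A` does not kill `c i₀`.
-/

section BaseChange

variable {R S A V : Type*} [CommSemiring R] [Semiring S] [Algebra R S]

theorem nontrivial_of_includeRight_ne_zero [Semiring A] [Algebra R A] {a : A}
    (ha : (Algebra.TensorProduct.includeRight a : S ⊗[R] A) ≠ 0) : Nontrivial S :=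
  have : Nontrivial (S ⊗[R] A) := nontrivial_of_ne _ _ ha
  Module.nontrivial S (S ⊗[R] A)

variable [AddCommMonoid V] [Module R V] [DistribSMul A V] [SMulCommClass A R V] {a : A}

variable (S) in
theorem baseChange_toLinearMap_eq_id (ha : ∀ v : V, a • v = v) :
    (DistribSMul.toLinearMap R V a).baseChange S = LinearMap.id := by
  have hid : DistribSMul.toLinearMap R V a = LinearMap.id := LinearMap.ext ha
  rw [hid, LinearMap.baseChange_id]

variable (S) in
theorem baseChange_toLinearMap_eq_zero (ha : ∀ v : V, a • v = 0) :
    (DistribSMul.toLinearMap R V a).baseChange S = 0 := by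
  have hzero : DistribSMul.toLinearMap R V a = 0 := LinearMap.ext ha
  rw [hzero, LinearMap.baseChange_zero]

end BaseChange

theorem nontrivial_tensorProduct_of_flat {R S V : Type*} [CommRing R] [Ring S] [Algebra R S]
    [AddCommGroup V] [Module R V] [Nontrivial V]
    (hflat : (Function.Injective (algebraMap R S) ∧ Module.Flat R V) ∨
      Module.FaithfullyFlat R S ∨ (Nontrivial S ∧ Module.FaithfullyFlat R V)) :
    Nontrivial (S ⊗[R] V) := by
  rcases hflat with ⟨hinj, _⟩ | _ | ⟨_, _⟩
  · have : FaithfulSMul R S := (faithfulSMul_iff_algebraMap_injective R S).mpr hinj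
    exact (Module.Flat.tensorProduct_mk_injective R V S).nontrivial
  · exact Module.FaithfullyFlat.lTensor_nontrivial R S V
  · exact Module.FaithfullyFlat.rTensor_nontrivial R V S

theorem stmt15_general {R S A I V : Type*} [CommRing R] [Ring S] [Algebra R S]
    [AddCommGroup V] [Module R V] [DistribSMul A V] [SMulCommClass A R V] [Nontrivial V]
    (c : I → A) (i₀ : I)
    (hbelongs : (∀ v : V, c i₀ • v = v) ∧ ∀ j, j ≠ i₀ → ∀ v : V, c j • v = 0)
    (hcase :
      (Function.Injective (algebraMap R S) ∧ Module.Flat R V) ∨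
      Module.FaithfullyFlat R S ∨
      (Nontrivial S ∧ Module.FaithfullyFlat R V)) :
    Nontrivial (S ⊗[R] V) ∧
    (∀ x : S ⊗[R] V, LinearMap.baseChange S (DistribSMul.toLinearMap R V (c i₀)) x = x) ∧
    (∀ j, j ≠ i₀ → LinearMap.baseChange S (DistribSMul.toLinearMap R V (c j)) = 0) :=
  ⟨nontrivial_tensorProduct_of_flat hcase,
    LinearMap.congr_fun (baseChange_toLinearMap_eq_id S hbelongs.1),
    fun j hj => baseChange_toLinearMap_eq_zero S (hbelongs.2 j hj)⟩

/-- **Lemma `block_extension_compatibility`.** Let `φ : R → S` be a morphism of commutative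
rings, `A` an `R`-algebra such that `A → A^S = S ⊗[R] A` kills no nonzero central idempotent,
`{c i}` a finite complete set of pairwise orthogonal nonzero central idempotents of `A`, and `V`
a nonzero `A`-module belonging to `c i₀`. If (a) `φ` is injective and `V` is `R`-projective, or
(b) `φ` is faithfully flat, or (c) `R` is local or a principal ideal domain and `V` is `R`-free,
then `V^S = S ⊗[R] V` is nonzero and belongs to the `φ`-block `φ_A(c i₀)` of `A^S`; here the
action of `φ_A(c j) = 1 ⊗ c j` on `V^S` is the base change of the `R`-linear action of `c j`
on `V`. -/
theorem stmt15 (R : Type u) [CommRing R] (S : Type u) [CommRing S] [Algebra R S]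
    (A : Type u) [Ring A] [Algebra R A]
    (hstable : ∀ c : A, c ∈ Set.center A → IsIdempotentElem c → c ≠ 0 →
      (Algebra.TensorProduct.includeRight c : S ⊗[R] A) ≠ 0)
    (I : Type u) [Fintype I] (c : I → A)
    (hc : ∀ i, c i ∈ Set.center A ∧ IsIdempotentElem (c i) ∧ c i ≠ 0)
    (horth : ∀ i j, i ≠ j → c i * c j = 0)
    (hsum : ∑ i, c i = 1)
    (V : Type u) [AddCommGroup V] [Module A V] [Module R V] [IsScalarTower R A V] [Nontrivial V]
    (i₀ : I)
    (hbelongs : (∀ v : V, c i₀ • v = v) ∧ ∀ j, j ≠ i₀ → ∀ v : V, c j • v = 0)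
    (hcase :
      (Function.Injective (algebraMap R S) ∧ Module.Projective R V) ∨
      Module.FaithfullyFlat R S ∨
      ((IsLocalRing R ∨ (IsDomain R ∧ IsPrincipalIdealRing R)) ∧ Module.Free R V)) :
    Nontrivial (S ⊗[R] V) ∧
    (∀ x : S ⊗[R] V,
      LinearMap.baseChange S (DistribMulAction.toLinearMap R V (c i₀)) x = x) ∧
    (∀ j, j ≠ i₀ →
      LinearMap.baseChange S (DistribMulAction.toLinearMap R V (c j)) = 0) := by
  obtain ⟨hcentral, hidem, hne⟩ := hc i₀
  have hS : Nontrivial S := nontrivial_of_includeRight_ne_zero (hstable (c i₀) hcentral hidem hne)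
  exact stmt15_general c i₀ hbelongs <| hcase.imp (fun ⟨hinj, _⟩ => ⟨hinj, inferInstance⟩) <|
    Or.imp_right fun ⟨_, _⟩ => ⟨hS, inferInstance⟩
end

section
/- Let R be a henselian local (commutative) ring with maximal ideal m and let A be a (not necessarily commutative) R-algebra that is finitely generated as an R-module. Then the quotient map A → A/mA is idempotent surjective: for every idempotent ē of A/mA there exists an idempotent e of A whose image in A/mA is ē. -/
open TensorProduct

/-!
Lift an idempotent of `A/mA` to some `a : A`, which is a root of a monic `p ∈ R[X]` with
`p(0) = 0`. Modulo `m` we have `p = X ^ n * h` with `n ≠ 0` and `h` prime to `X`. Hensel's lemma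
lifts this to a coprime factorization over `R`, which splits `R[X]/(p)` as a product of rings; the
corresponding idempotent of `R[X]/(p)`, evaluated at `a`, is an idempotent of `A` that reduces to
the given one.

Mathlib's henselian local rings are defined by lifting simple roots. Coprime monic factorizations
of `p` are the points of an étale `R`-algebra, which is locally standard étale, and a point of a
standard étale algebra is a simple root.
-/

open Polynomial IsLocalRing

section Henselian

variable {R : Type*} [CommRing R] [HenselianLocalRing R]

theorem exists_standardEtalePair_hasMap_residue_eq (P : StandardEtalePair R)
    {x : ResidueField R} (hx : P.HasMap x) : ∃ a : R, P.HasMap a ∧ residue R a = x := by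
  have simple_root_lifts := ((HenselianLocalRing.TFAE R).out 0 1).mp ‹_›
  obtain ⟨a, root_a, rfl⟩ :=
    simple_root_lifts P.f P.monic_f x hx.1 hx.isUnit_derivative_f.ne_zero
  refine ⟨a, ⟨by simpa [IsRoot] using root_a, ?_⟩, rfl⟩
  have unit_residue : IsUnit (residue R (aeval a P.g)) := by
    simpa only [← ResidueField.algebraMap_eq, aeval_algebraMap_apply] using hx.2
  exact isUnit_of_map_unit (residue R) _ unit_residue

variable {S : Type*} [CommRing S] [Algebra R S]

theorem exists_algHom_ofId_comp_eq_of_isStandardEtale [Algebra.IsStandardEtale R S]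
    (φ : S →ₐ[R] ResidueField R) :
    ∃ ψ : S →ₐ[R] R, (Algebra.ofId R (ResidueField R)).comp ψ = φ := by
  obtain ⟨P⟩ := Algebra.IsStandardEtale.nonempty_standardEtalePresentation (R := R) (S := S)
  obtain ⟨a, ha, residue_a⟩ := exists_standardEtalePair_hasMap_residue_eq P.P (P.hasMap.map φ)
  refine ⟨(P.P.lift a ha).comp P.equivRing.toAlgHom, P.hom_ext ?_⟩
  simpa using residue_a

theorem exists_algHom_ofId_comp_eq_of_etale [Algebra.Etale R S] (φ : S →ₐ[R] ResidueField R) :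
    ∃ ψ : S →ₐ[R] R, (Algebra.ofId R (ResidueField R)).comp ψ = φ := by
  have prime_ker : (RingHom.ker φ).IsPrime := RingHom.ker_isPrime _
  obtain ⟨s, hs, _⟩ := Algebra.IsEtaleAt.exists_isStandardEtale (R := R) (RingHom.ker φ)
  have unit_s : IsUnit (φ s) := isUnit_iff_ne_zero.mpr hs
  obtain ⟨ψ, hψ⟩ := exists_algHom_ofId_comp_eq_of_isStandardEtale
    (IsLocalization.Away.liftAlgHom (S := Localization.Away s) (f := φ) s unit_s)
  refine ⟨ψ.comp (IsScalarTower.toAlgHom R S (Localization.Away s)), ?_⟩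
  rw [← AlgHom.comp_assoc, hψ]
  ext
  simp

theorem exists_monic_isCoprime_mul_eq_of_map_residue_eq_mul {p : R[X]} (hp : p.Monic)
    {g h : (ResidueField R)[X]} (hg : g.Monic) (hh : h.Monic) (hgh : IsCoprime g h)
    (hmap : p.map (residue R) = g * h) :
    ∃ g' h' : R[X], g'.Monic ∧ h'.Monic ∧ IsCoprime g' h' ∧ g' * h' = p ∧
      g'.map (residue R) = g ∧ h'.map (residue R) = h := by
  have natDegree_eq : p.natDegree = g.natDegree + h.natDegree := by
    rw [← hp.natDegree_map (residue R), hmap, hg.natDegree_mul hh]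
  let factorizations (T : Type _) [CommRing T] [Algebra R T] :=
    UniversalCoprimeFactorizationRing.homEquiv T g.natDegree h.natDegree natDegree_eq
      (.mk p hp rfl)
  obtain ⟨ψ, hψ⟩ := exists_algHom_ofId_comp_eq_of_etale
    ((factorizations (ResidueField R)).symm ⟨(.mk g hg rfl, .mk h hh rfl), hmap.symm, hgh⟩)
  have map_fst := UniversalCoprimeFactorizationRing.homEquiv_comp_fst _ _ _ natDegree_eq
    (.mk p hp rfl) ψ (Algebra.ofId R (ResidueField R))
  have map_snd := UniversalCoprimeFactorizationRing.homEquiv_comp_snd _ _ _ natDegree_eq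
    (.mk p hp rfl) ψ (Algebra.ofId R (ResidueField R))
  rw [hψ, Equiv.apply_symm_apply] at map_fst map_snd
  obtain ⟨mul_eq, coprime⟩ := (factorizations R ψ).2
  exact ⟨_, _, (factorizations R ψ).1.1.monic, (factorizations R ψ).1.2.monic, coprime,
    mul_eq.trans Polynomial.map_id, congrArg Subtype.val map_fst.symm,
    congrArg Subtype.val map_snd.symm⟩

end Henselian

theorem exists_isCoprime_X_sub_C_pow_mul_eq {K : Type*} [Field K] {p : K[X]} (hp : p.Monic)
    (c : K) :
    ∃ h : K[X], h.Monic ∧ IsCoprime ((X - C c) ^ p.rootMultiplicity c) h ∧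
      p = (X - C c) ^ p.rootMultiplicity c * h := by
  obtain ⟨h, p_eq, not_dvd⟩ := exists_eq_pow_rootMultiplicity_mul_and_not_dvd p hp.ne_zero c
  have monic_pow : ((X - C c) ^ p.rootMultiplicity c).Monic := (monic_X_sub_C c).pow _
  exact ⟨h, monic_pow.of_mul_monic_left (p_eq ▸ hp),
    ((irreducible_X_sub_C c).coprime_iff_not_dvd.mpr not_dvd).pow_left, p_eq⟩

theorem exists_isIdempotentElem_aeval_of_isCoprime {R A : Type*} [CommRing R] [Ring A]
    [Algebra R A] {a : A} {g h : R[X]} (hgh : IsCoprime g h) (ha : aeval a (g * h) = 0) :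
    ∃ q : R[X], g ∣ q ∧ h ∣ 1 - q ∧ IsIdempotentElem (aeval a q) := by
  obtain ⟨u, v, bezout⟩ := hgh
  refine ⟨u * g, dvd_mul_left _ _, ⟨v, by linear_combination -bezout⟩, ?_⟩
  have sq_eq : (u * g) * (u * g) = u * g - u * v * (g * h) := by
    linear_combination u * g * bezout
  rw [IsIdempotentElem, ← map_mul, sq_eq, map_sub, map_mul _ (u * v), ha, mul_zero, sub_zero]

theorem aeval_eq_self_of_dvd_of_dvd_one_sub {R B : Type*} [CommRing R] [Ring B] [Algebra R B]
    {b : B} (hb : IsIdempotentElem b) {g h q : R[X]} (hg : aeval b g = b)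
    (hgh : aeval b (g * h) = 0) (hgq : g ∣ q) (hhq : h ∣ 1 - q) : aeval b q = b := by
  obtain ⟨u, rfl⟩ := hgq
  obtain ⟨v, hv⟩ := hhq
  have mul_self : b * aeval b (g * u) = aeval b (g * u) := by
    rw [map_mul, hg, ← mul_assoc, hb.eq]
  have mul_one_sub : b * aeval b (1 - g * u) = 0 := by
    rw [map_mul, hg] at hgh
    rw [hv, map_mul, ← mul_assoc, hgh, zero_mul]
  rwa [map_sub, map_one, mul_sub, mul_one, mul_self, sub_eq_zero, eq_comm] at mul_one_sub

theorem exists_isIdempotentElem_map_eq_of_isIntegral {R A B : Type*} [CommRing R]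
    [HenselianLocalRing R] [Ring A] [Algebra R A] [Ring B] [Algebra R B]
    [Algebra (ResidueField R) B] [IsScalarTower R (ResidueField R) B] (π : A →ₐ[R] B) {a : A}
    (integral_a : IsIntegral R a) (idem : IsIdempotentElem (π a)) :
    ∃ e : A, IsIdempotentElem e ∧ π e = π a := by
  obtain ⟨p, monic_p, root_p⟩ := integral_a
  have monic_Xp : (X * p).Monic := monic_X.mul monic_p
  have root_Xp : aeval a (X * p) = 0 := by rw [map_mul, aeval_def a p, root_p, mul_zero]
  have monic_map : ((X * p).map (residue R)).Monic := monic_Xp.map _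
  obtain ⟨h₀, monic_h₀, coprime₀, map_eq⟩ := exists_isCoprime_X_sub_C_pow_mul_eq monic_map 0
  have pos_n : 0 < ((X * p).map (residue R)).rootMultiplicity 0 :=
    (rootMultiplicity_pos monic_map.ne_zero).mpr (by simp)
  set n := ((X * p).map (residue R)).rootMultiplicity 0
  obtain ⟨g, h, -, -, coprime, mul_eq, map_g, -⟩ :=
    exists_monic_isCoprime_mul_eq_of_map_residue_eq_mul monic_Xp
      ((monic_X_sub_C 0).pow n) monic_h₀ coprime₀ map_eq
  obtain ⟨q, g_dvd, h_dvd, idem_q⟩ :=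
    exists_isIdempotentElem_aeval_of_isCoprime coprime (mul_eq ▸ root_Xp)
  have aeval_g : aeval (π a) g = π a := by
    rw [← aeval_map_algebraMap (ResidueField R), ResidueField.algebraMap_eq, map_g]
    simpa using idem.pow_eq pos_n.ne'
  have aeval_gh : aeval (π a) (g * h) = 0 := by
    rw [mul_eq, aeval_algHom_apply, root_Xp, map_zero]
  refine ⟨aeval a q, idem_q, ?_⟩
  rw [← aeval_algHom_apply]
  exact aeval_eq_self_of_dvd_of_dvd_one_sub idem aeval_g aeval_gh g_dvd h_dvd

theorem stmt17_general (R : Type*) [CommRing R] [HenselianLocalRing R]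
    (A : Type*) [Ring A] [Algebra R A] [Algebra.IsIntegral R A] :
    ∀ f : (R ⧸ maximalIdeal R) ⊗[R] A, IsIdempotentElem f →
      ∃ e : A, IsIdempotentElem e ∧
        (Algebra.TensorProduct.includeRight e : (R ⧸ maximalIdeal R) ⊗[R] A) = f := by
  intro f idem
  obtain ⟨a, rfl⟩ := Algebra.TensorProduct.includeRight_surjective A
    (R := R) (S := R ⧸ maximalIdeal R) Ideal.Quotient.mk_surjective f
  let : Algebra (ResidueField R) ((R ⧸ maximalIdeal R) ⊗[R] A) :=
    inferInstanceAs (Algebra (R ⧸ maximalIdeal R) _)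
  have : IsScalarTower R (ResidueField R) ((R ⧸ maximalIdeal R) ⊗[R] A) :=
    inferInstanceAs (IsScalarTower R (R ⧸ maximalIdeal R) _)
  exact exists_isIdempotentElem_map_eq_of_isIntegral
    (Algebra.TensorProduct.includeRight : A →ₐ[R] (R ⧸ maximalIdeal R) ⊗[R] A)
    (Algebra.IsIntegral.isIntegral a) idem

/-- **Lemma `semiperfect_std_settings` (henselian case).** If `R` is a henselian local
commutative ring with maximal ideal `m` and `A` is a possibly noncommutative `R`-algebra which
is finitely generated as an `R`-module, then the quotient map `A → A/mA = κ(m) ⊗[R] A` is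
idempotent surjective: every idempotent of `A/mA` lifts to an idempotent of `A`. -/
theorem stmt17 (R : Type u) [CommRing R] [HenselianLocalRing R]
    (A : Type u) [Ring A] [Algebra R A] [Module.Finite R A] :
    ∀ f : (R ⧸ IsLocalRing.maximalIdeal R) ⊗[R] A, IsIdempotentElem f →
      ∃ e : A, IsIdempotentElem e ∧
        (Algebra.TensorProduct.includeRight e : (R ⧸ IsLocalRing.maximalIdeal R) ⊗[R] A) = f :=
  stmt17_general R A
end
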